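/- arXiv:1312.0034 — 2 statements merged into one kernel-verified Lean document; each statement's English description precedes it below -/
import Mathlib

section
/- Let u_0 ∈ ℂ_p with |π|^{1/(q+1)} ≤ |u_0| < 1 and set γ = |u_0|. Then Φ is injective on the open disk {u ∈ ℂ_p : |u − u_0| < (|π|·γ^{-2})^{1/(q-1)}}: if u, u' both lie in this disk and φ_0(u)·φ_1(u') = φ_1(u)·φ_0(u'), then u = u'. -/
open Filter


/-- The coefficients `m_k(u)` of the quasi-logarithm of the Gross-Hopkins
universal deformation: `m_0 = 1`, `m_1(u) = u/π`, and
`m_k(u) = (u/π)·m_{k-1}(u^q) + (1/π)·m_{k-2}(u^{q²})`. -/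
noncomputable def ghm {C : Type*} [Field C] (π : C) (q : ℕ) : ℕ → C → C
  | 0, _ => 1
  | 1, u => u / π
  | (k+2), u => (u / π) * ghm π q (k+1) (u ^ q) + (1 / π) * ghm π q k (u ^ (q^2))

/-- First coordinate of the Gross-Hopkins period map:
`φ₀(u) = lim_k π^k · m_{2k}(u)`. -/
noncomputable def ghphi0 {C : Type*} [NormedField C] (π : C) (q : ℕ) (u : C) : C :=
  limUnder atTop (fun k => π ^ k * ghm π q (2*k) u)

/-- Second coordinate of the Gross-Hopkins period map:
`φ₁(u) = lim_{k≥1} π^k · m_{2k-1}(u)`. -/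
noncomputable def ghphi1 {C : Type*} [NormedField C] (π : C) (q : ℕ) (u : C) : C :=
  limUnder atTop (fun k => π ^ (k+1) * ghm π q (2*k+1) u)

/-!
For fixed `u` the coefficients satisfy the linear recursion
`π m_{n+2}(u) = u^{q^{n+1}} m_{n+1}(u) + m_n(u)`, so for two points `u`, `v` the normalized
Casoratians `W_n = π^{n+1} (m_{n+1}(u) m_n(v) - m_n(u) m_{n+1}(v))` satisfy `W_0 = u - v` and
`W_{n+1} + W_n = π^{n+1} m_{n+1}(u) m_{n+1}(v) (u^{q^{n+1}} - v^{q^{n+1}})`.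
The coefficients grow at most geometrically, `‖m_n‖ ≤ c^n`, whereas with
`θ = max (‖u - v‖^{q-1}) ‖p‖` the difference of the `q^n`-th powers is at most `θ^n ‖u - v‖`.
When `‖u‖, ‖v‖ ≤ γ`, some `c` satisfies `‖π‖ c² θ < 1` as soon as `θ < 1` and `θ γ² < ‖π‖`. The
right-hand side is then smaller than `‖u - v‖`, and by the ultrametric inequality all the `W_n` have
absolute value `‖u - v‖`. As `W_{2k}` tends to `φ₁(u) φ₀(v) - φ₀(u) φ₁(v)`, this difference also has
absolute value `‖u - v‖`.
-/

section RealEstimates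

lemma tendsto_pow_mul_pow_pow_atTop_nhds_zero {q : ℕ} (hq : 1 < q) (c : ℝ) {x : ℝ}
    (hx : |x| < 1) : Tendsto (fun n : ℕ ↦ c ^ n * x ^ q ^ n) atTop (nhds 0) := by
  obtain ⟨k, hk⟩ := pow_unbounded_of_one_lt |c| (show (1 : ℝ) < q by exact_mod_cast hq)
  have hlim : Tendsto (fun n ↦ ((q ^ n : ℕ) : ℝ) ^ k * |x| ^ q ^ n) atTop (nhds 0) :=
    (tendsto_pow_const_mul_const_pow_of_abs_lt_one k (by rwa [abs_abs])).comp
      (tendsto_pow_atTop_atTop_of_one_lt hq)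
  refine squeeze_zero_norm (fun n ↦ ?_) hlim
  rw [norm_mul, norm_pow, norm_pow, Real.norm_eq_abs, Real.norm_eq_abs, Nat.cast_pow,
    pow_right_comm]
  gcongr

lemma exists_growth_rate {ϖ γ θ : ℝ} (hϖ : 0 < ϖ) (hθ : θ < 1) (hγθ : θ * γ ^ 2 < ϖ) :
    ∃ c, 1 ≤ ϖ * c ^ 2 ∧ γ ≤ ϖ * c ∧ ϖ * c ^ 2 * θ < 1 := by
  have hsq : √(max ϖ⁻¹ ((γ / ϖ) ^ 2)) ^ 2 = max ϖ⁻¹ ((γ / ϖ) ^ 2) := Real.sq_sqrt (by positivity)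
  refine ⟨√(max ϖ⁻¹ ((γ / ϖ) ^ 2)), ?_, ?_, ?_⟩
  · rw [hsq, ← div_le_iff₀' hϖ, one_div]
    exact le_max_left _ _
  · rw [← div_le_iff₀' hϖ]
    exact Real.le_sqrt_of_sq_le (le_max_right _ _)
  · rw [hsq]
    rcases max_choice ϖ⁻¹ ((γ / ϖ) ^ 2) with h | h <;> rw [h]
    · rwa [mul_inv_cancel₀ hϖ.ne', one_mul]
    · rw [show ϖ * (γ / ϖ) ^ 2 * θ = θ * γ ^ 2 / ϖ by field_simp]
      exact (div_lt_one hϖ).2 hγθ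

lemma le_pow_of_rpow_le {ϖ γ : ℝ} {n : ℕ} (hϖ : 0 ≤ ϖ) (hγ : 0 ≤ γ)
    (h : ϖ ^ ((1 : ℝ) / (n + 1)) ≤ γ) : ϖ ≤ γ ^ (n + 1) := by
  rw [one_div, Real.rpow_inv_le_iff_of_pos hϖ hγ (by positivity)] at h
  exact_mod_cast h

lemma pow_mul_sq_lt_of_lt_rpow {ϖ γ δ : ℝ} {q : ℕ} (hq : 1 < q) (hϖ : 0 ≤ ϖ) (hγ : 0 < γ)
    (hδ : 0 ≤ δ) (h : δ < (ϖ * γ ^ (-(2 : ℝ))) ^ ((1 : ℝ) / (q - 1))) :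
    δ ^ (q - 1) * γ ^ 2 < ϖ := by
  have hq' : ((q - 1 : ℕ) : ℝ) = q - 1 := Nat.cast_pred (by lia)
  have hpos : (0 : ℝ) < (q - 1 : ℕ) := by exact_mod_cast Nat.sub_pos_of_lt hq
  rw [one_div, ← hq', Real.lt_rpow_inv_iff_of_pos hδ (by positivity) hpos, Real.rpow_natCast,
    Real.rpow_neg hγ.le, Real.rpow_ofNat, ← div_eq_mul_inv] at h
  exact (lt_div_iff₀ (by positivity)).1 h

end RealEstimates

lemma norm_sub_le_max_norm {E : Type*} [SeminormedAddCommGroup E] [IsUltrametricDist E]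
    (x y : E) : ‖x - y‖ ≤ max ‖x‖ ‖y‖ := by
  simpa only [sub_eq_add_neg, norm_neg] using IsUltrametricDist.norm_add_le_max x (-y)

lemma norm_le_norm_center {E : Type*} [SeminormedAddCommGroup E] [IsUltrametricDist E] {ϖ : ℝ}
    {q : ℕ} {u w : E} (hq : q ≠ 0) (hϖ : ϖ ≤ ‖u‖ ^ (q + 1))
    (hw : ‖w - u‖ ^ (q - 1) * ‖u‖ ^ 2 < ϖ) : ‖w‖ ≤ ‖u‖ := by
  rw [show q + 1 = q - 1 + 2 by lia, pow_add] at hϖ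
  have hlt : ‖w - u‖ < ‖u‖ := lt_of_pow_lt_pow_left₀ _ (norm_nonneg u)
    (lt_of_mul_lt_mul_right (hw.trans_le hϖ) (sq_nonneg _))
  simpa only [sub_add_cancel, max_eq_right hlt.le] using
    IsUltrametricDist.norm_add_le_max (w - u) u

section PrimePowers

variable {C : Type*} [NormedField C] {p : ℕ}

lemma norm_prime_lt_one_of_isometry [Fact p.Prime] [Algebra ℚ_[p] C]
    (hiso : ∀ x : ℚ_[p], ‖algebraMap ℚ_[p] C x‖ = ‖x‖) : ‖(p : C)‖ < 1 := by
  simpa only [← hiso, map_natCast] using Padic.norm_p_lt_one (p := p)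

variable [IsUltrametricDist C] {x y : C}

lemma norm_pow_prime_pow_sub_le (hp : p.Prime) (r : ℕ) (hx : ‖x‖ ≤ 1) (hy : ‖y‖ ≤ 1) :
    ‖x ^ p ^ r - y ^ p ^ r‖ ≤ max (‖x - y‖ ^ (p ^ r - 1)) ‖(p : C)‖ * ‖x - y‖ := by
  have hxy : ‖x - y‖ ≤ 1 := (norm_sub_le_max_norm x y).trans (max_le hx hy)
  have hbinom := add_pow_prime_pow_eq hp (x - y) y r
  set S := ∑ k ∈ Finset.Ioo 0 (p ^ r),
    (x - y) ^ (k - 1) * y ^ (p ^ r - k - 1) * (((p ^ r).choose k / p : ℕ) : C)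
  have hS : ‖S‖ ≤ 1 := by
    refine IsUltrametricDist.norm_sum_le_of_forall_le_of_nonneg zero_le_one fun k _ ↦ ?_
    rw [norm_mul, norm_mul, norm_pow, norm_pow]
    exact mul_le_one₀ (mul_le_one₀ (pow_le_one₀ (norm_nonneg _) hxy) (by positivity)
      (pow_le_one₀ (norm_nonneg _) hy)) (norm_nonneg _) (IsUltrametricDist.norm_natCast_le_one C _)
  calc ‖x ^ p ^ r - y ^ p ^ r‖ = ‖(x - y) ^ p ^ r + p * (x - y) * y * S‖ := by
        rw [sub_add_cancel] at hbinom
        rw [hbinom, add_right_comm, add_sub_cancel_right]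
    _ ≤ max ‖(x - y) ^ p ^ r‖ ‖p * (x - y) * y * S‖ := IsUltrametricDist.norm_add_le_max _ _
    _ ≤ max (‖x - y‖ ^ (p ^ r - 1) * ‖x - y‖) (‖(p : C)‖ * ‖x - y‖ * 1 * 1) := by
        rw [norm_pow, pow_sub_one_mul (pow_ne_zero r hp.ne_zero), norm_mul, norm_mul, norm_mul]
        gcongr
    _ = max (‖x - y‖ ^ (p ^ r - 1)) ‖(p : C)‖ * ‖x - y‖ := by
        rw [mul_one, mul_one, max_mul_of_nonneg _ _ (norm_nonneg _)]

lemma norm_pow_prime_pow_pow_sub_le (hp : p.Prime) (r : ℕ) (hx : ‖x‖ ≤ 1) (hy : ‖y‖ ≤ 1) (n : ℕ) :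
    ‖x ^ (p ^ r) ^ n - y ^ (p ^ r) ^ n‖ ≤
      max (‖x - y‖ ^ (p ^ r - 1)) ‖(p : C)‖ ^ n * ‖x - y‖ := by
  have hxy : ‖x - y‖ ≤ 1 := (norm_sub_le_max_norm x y).trans (max_le hx hy)
  set θ := max (‖x - y‖ ^ (p ^ r - 1)) ‖(p : C)‖
  have hθ0 : 0 ≤ θ := le_max_of_le_right (norm_nonneg _)
  have hθ1 : θ ≤ 1 :=
    max_le (pow_le_one₀ (norm_nonneg _) hxy) (IsUltrametricDist.norm_natCast_le_one C p)
  induction n with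
  | zero => simp
  | succ n ih =>
    have hle : ‖x ^ (p ^ r) ^ n - y ^ (p ^ r) ^ n‖ ≤ ‖x - y‖ :=
      ih.trans (mul_le_of_le_one_left (norm_nonneg _) (pow_le_one₀ hθ0 hθ1))
    have hpow {z : C} (hz : ‖z‖ ≤ 1) : ‖z ^ (p ^ r) ^ n‖ ≤ 1 :=
      (norm_pow z _).trans_le (pow_le_one₀ (norm_nonneg z) hz)
    calc ‖x ^ (p ^ r) ^ (n + 1) - y ^ (p ^ r) ^ (n + 1)‖
        = ‖(x ^ (p ^ r) ^ n) ^ p ^ r - (y ^ (p ^ r) ^ n) ^ p ^ r‖ := by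
          simp only [pow_succ, pow_mul]
      _ ≤ max (‖x ^ (p ^ r) ^ n - y ^ (p ^ r) ^ n‖ ^ (p ^ r - 1)) ‖(p : C)‖ *
            ‖x ^ (p ^ r) ^ n - y ^ (p ^ r) ^ n‖ :=
          norm_pow_prime_pow_sub_le hp r (hpow hx) (hpow hy)
      _ ≤ θ * (θ ^ n * ‖x - y‖) := by
          gcongr
          exact max_le_max_right _ (pow_le_pow_left₀ (norm_nonneg _) hle _)
      _ = θ ^ (n + 1) * ‖x - y‖ := by ring

end PrimePowers

section Recursion

variable {C : Type*} [Field C] {π : C} (q : ℕ)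

lemma ghm_add_two (π : C) : ∀ (n : ℕ) (u : C),
    ghm π q (n + 2) u = (ghm π q (n + 1) u * u ^ q ^ (n + 1) + ghm π q n u) / π
  | 0, u => by simp only [ghm]; ring
  | 1, u => by simp only [ghm, ← pow_mul]; ring
  | n + 2, u => by
    rw [ghm, ghm_add_two π (n + 1) (u ^ q), ghm_add_two π n (u ^ q ^ 2),
      ghm.eq_3 π q u (n + 1), ghm.eq_3 π q u n]
    simp only [← pow_mul]
    ring

/-- The Casoratian (discrete Wronskian) of the sequences `n ↦ m_n(u)` and `n ↦ m_n(v)`, multiplied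
by `π ^ (n + 1)`. -/
noncomputable def ghCasoratian (π : C) (q : ℕ) (u v : C) (n : ℕ) : C :=
  π ^ (n + 1) * (ghm π q (n + 1) u * ghm π q n v - ghm π q n u * ghm π q (n + 1) v)

lemma ghCasoratian_self (u : C) (n : ℕ) : ghCasoratian π q u u n = 0 := by
  rw [ghCasoratian, mul_comm (ghm π q n u), sub_self, mul_zero]

lemma ghCasoratian_zero (hπ : π ≠ 0) (u v : C) : ghCasoratian π q u v 0 = u - v := by
  simp only [ghCasoratian, ghm, zero_add, pow_one, mul_one, one_mul]
  field_simp

lemma ghCasoratian_succ_add (hπ : π ≠ 0) (u v : C) (n : ℕ) :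
    ghCasoratian π q u v (n + 1) + ghCasoratian π q u v n =
      π ^ (n + 1) * (ghm π q (n + 1) u * ghm π q (n + 1) v) *
        (u ^ q ^ (n + 1) - v ^ q ^ (n + 1)) := by
  rw [ghCasoratian, ghCasoratian, ghm_add_two, ghm_add_two]
  field_simp
  ring

end Recursion

section Ultrametric

variable {C : Type*} [NormedField C] [IsUltrametricDist C] {π u v : C}

lemma norm_ghm_le_pow {q : ℕ} (hq : q ≠ 0) (hu : ‖u‖ ≤ 1) {c : ℝ} (hπc : 1 ≤ ‖π‖ * c ^ 2)
    (huc : ‖u‖ ≤ ‖π‖ * c) : ∀ n, ‖ghm π q n u‖ ≤ c ^ n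
  | 0 => by simp [ghm]
  | 1 => by
    have hπ : 0 < ‖π‖ := pos_of_mul_pos_left (one_pos.trans_le hπc) (sq_nonneg c)
    rwa [ghm, norm_div, pow_one, div_le_iff₀' hπ]
  | n + 2 => by
    have hπ : 0 < ‖π‖ := pos_of_mul_pos_left (one_pos.trans_le hπc) (sq_nonneg c)
    have hc : 0 ≤ c := nonneg_of_mul_nonneg_right ((norm_nonneg u).trans huc) hπ
    have hupow : ‖u ^ q ^ (n + 1)‖ ≤ ‖π‖ * c := by
      rw [norm_pow]
      exact (pow_le_of_le_one (norm_nonneg u) hu (pow_ne_zero _ hq)).trans huc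
    rw [ghm_add_two, norm_div, div_le_iff₀' hπ]
    refine (IsUltrametricDist.norm_add_le_max _ _).trans (max_le ?_ ?_)
    · calc ‖ghm π q (n + 1) u * u ^ q ^ (n + 1)‖ ≤ c ^ (n + 1) * (‖π‖ * c) := by
            rw [norm_mul]
            gcongr
            exact norm_ghm_le_pow hq hu hπc huc (n + 1)
        _ = ‖π‖ * c ^ (n + 2) := by ring
    · calc ‖ghm π q n u‖ ≤ c ^ n * 1 := (norm_ghm_le_pow hq hu hπc huc n).trans_eq (mul_one _).symm
        _ ≤ c ^ n * (‖π‖ * c ^ 2) := by gcongr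
        _ = ‖π‖ * c ^ (n + 2) := by ring

section Limits

variable {q : ℕ}

lemma cauchySeq_pow_mul_ghm (hq : 1 < q) (hπ0 : π ≠ 0) (hπ1 : ‖π‖ ≤ 1) (hu : ‖u‖ < 1) (j : ℕ) :
    CauchySeq fun k ↦ π ^ k * ghm π q (2 * k + j) u := by
  have hπ : 0 < ‖π‖ := norm_pos_iff.2 hπ0
  have hgrowth (n : ℕ) : ‖ghm π q n u‖ ≤ ‖π‖⁻¹ ^ n := by
    refine norm_ghm_le_pow (by lia) hu.le ?_ ?_ n
    · rw [sq, ← mul_assoc, mul_inv_cancel₀ hπ.ne', one_mul]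
      exact (one_le_inv₀ hπ).2 hπ1
    · rw [mul_inv_cancel₀ hπ.ne']
      exact hu.le
  have hdecay : Tendsto (fun k ↦ ‖π‖⁻¹ ^ (2 * k + j + 1) * ‖u‖ ^ q ^ (2 * k + j + 1))
      atTop (nhds 0) :=
    (tendsto_pow_mul_pow_pow_atTop_nhds_zero hq ‖π‖⁻¹ (by rwa [abs_norm])).comp
      (tendsto_atTop_mono (fun k ↦ (by lia : k ≤ 2 * k + j + 1)) tendsto_id)
  refine NonarchimedeanAddGroup.cauchySeq_of_tendsto_sub_nhds_zero
    (squeeze_zero_norm (fun k ↦ ?_) hdecay)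
  calc ‖π ^ (k + 1) * ghm π q (2 * (k + 1) + j) u - π ^ k * ghm π q (2 * k + j) u‖
      = ‖π‖ ^ k * (‖ghm π q (2 * k + j + 1) u‖ * ‖u‖ ^ q ^ (2 * k + j + 1)) := by
        rw [show 2 * (k + 1) + j = 2 * k + j + 2 by ring, ghm_add_two, ← norm_pow, ← norm_pow,
          ← norm_mul, ← norm_mul]
        congr 1
        field_simp
        ring
    _ ≤ 1 * (‖π‖⁻¹ ^ (2 * k + j + 1) * ‖u‖ ^ q ^ (2 * k + j + 1)) := by
        gcongr
        · exact pow_le_one₀ (norm_nonneg π) hπ1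
        · exact hgrowth _
    _ = _ := one_mul _

variable [CompleteSpace C]

lemma tendsto_ghphi0 (hq : 1 < q) (hπ0 : π ≠ 0) (hπ1 : ‖π‖ ≤ 1) (hu : ‖u‖ < 1) :
    Tendsto (fun k ↦ π ^ k * ghm π q (2 * k) u) atTop (nhds (ghphi0 π q u)) :=
  (cauchySeq_pow_mul_ghm hq hπ0 hπ1 hu 0).tendsto_limUnder

lemma tendsto_ghphi1 (hq : 1 < q) (hπ0 : π ≠ 0) (hπ1 : ‖π‖ ≤ 1) (hu : ‖u‖ < 1) :
    Tendsto (fun k ↦ π ^ (k + 1) * ghm π q (2 * k + 1) u) atTop (nhds (ghphi1 π q u)) := by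
  obtain ⟨l, hl⟩ := cauchySeq_tendsto_of_complete (cauchySeq_pow_mul_ghm hq hπ0 hπ1 hu 1)
  refine tendsto_nhds_limUnder ⟨π * l, ?_⟩
  simpa only [pow_succ', mul_assoc] using hl.const_mul π

lemma tendsto_ghCasoratian (hq : 1 < q) (hπ0 : π ≠ 0) (hπ1 : ‖π‖ ≤ 1) (hu : ‖u‖ < 1)
    (hv : ‖v‖ < 1) :
    Tendsto (fun k ↦ ghCasoratian π q u v (2 * k)) atTop
      (nhds (ghphi1 π q u * ghphi0 π q v - ghphi0 π q u * ghphi1 π q v)) := by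
  refine (((tendsto_ghphi1 hq hπ0 hπ1 hu).mul (tendsto_ghphi0 hq hπ0 hπ1 hv)).sub
    ((tendsto_ghphi0 hq hπ0 hπ1 hu).mul (tendsto_ghphi1 hq hπ0 hπ1 hv))).congr fun k ↦ ?_
  rw [ghCasoratian]
  ring

end Limits

section Casoratian

variable {p r : ℕ} {γ : ℝ}

lemma norm_ghCasoratian_succ_add_le (hp : p.Prime) {c : ℝ} (hu1 : ‖u‖ ≤ 1) (hv1 : ‖v‖ ≤ 1)
    (hπc : 1 ≤ ‖π‖ * c ^ 2) (huc : ‖u‖ ≤ ‖π‖ * c) (hvc : ‖v‖ ≤ ‖π‖ * c) (n : ℕ) :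
    ‖ghCasoratian π (p ^ r) u v (n + 1) + ghCasoratian π (p ^ r) u v n‖ ≤
      (‖π‖ * c ^ 2 * max (‖u - v‖ ^ (p ^ r - 1)) ‖(p : C)‖) ^ (n + 1) * ‖u - v‖ := by
  have hq : p ^ r ≠ 0 := pow_ne_zero r hp.ne_zero
  have hπ : 0 < ‖π‖ := pos_of_mul_pos_left (one_pos.trans_le hπc) (sq_nonneg c)
  have hc : 0 ≤ c := nonneg_of_mul_nonneg_right ((norm_nonneg u).trans huc) hπ
  set θ := max (‖u - v‖ ^ (p ^ r - 1)) ‖(p : C)‖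
  rw [ghCasoratian_succ_add _ (norm_pos_iff.1 hπ), norm_mul, norm_mul, norm_mul, norm_pow]
  calc _ ≤ ‖π‖ ^ (n + 1) * (c ^ (n + 1) * c ^ (n + 1)) * (θ ^ (n + 1) * ‖u - v‖) := by
        gcongr
        · exact norm_ghm_le_pow hq hu1 hπc huc _
        · exact norm_ghm_le_pow hq hv1 hπc hvc _
        · exact norm_pow_prime_pow_pow_sub_le hp r hu1 hv1 _
    _ = (‖π‖ * c ^ 2 * θ) ^ (n + 1) * ‖u - v‖ := by ring

lemma norm_ghCasoratian (hp : p.Prime) (hr : r ≠ 0) (hpπ : ‖(p : C)‖ ≤ ‖π‖) (hπ0 : π ≠ 0)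
    (hπ1 : ‖π‖ < 1) (hγ : γ < 1) (hu : ‖u‖ ≤ γ) (hv : ‖v‖ ≤ γ)
    (huv : ‖u - v‖ ^ (p ^ r - 1) * γ ^ 2 < ‖π‖) (n : ℕ) :
    ‖ghCasoratian π (p ^ r) u v n‖ = ‖u - v‖ := by
  rcases eq_or_ne u v with rfl | hne
  · rw [ghCasoratian_self, sub_self]
  have hq : 1 < p ^ r := Nat.one_lt_pow hr hp.one_lt
  have hπ : 0 < ‖π‖ := norm_pos_iff.2 hπ0
  have hγ0 : 0 ≤ γ := (norm_nonneg u).trans hu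
  have hδ : ‖u - v‖ < 1 := (norm_sub_le_max_norm u v).trans_lt ((max_le hu hv).trans_lt hγ)
  set θ := max (‖u - v‖ ^ (p ^ r - 1)) ‖(p : C)‖ with hθ
  have hθ0 : 0 ≤ θ := le_max_of_le_right (norm_nonneg _)
  have hθ1 : θ < 1 :=
    max_lt (pow_lt_one₀ (norm_nonneg _) hδ (by lia)) (hpπ.trans_lt hπ1)
  have hθγ : θ * γ ^ 2 < ‖π‖ := by
    rw [hθ, max_mul_of_nonneg _ _ (sq_nonneg γ)]
    exact max_lt huv ((mul_le_mul_of_nonneg_right hpπ (sq_nonneg γ)).trans_lt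
      (mul_lt_of_lt_one_right hπ (pow_lt_one₀ hγ0 hγ two_ne_zero)))
  obtain ⟨c, hπc, hγc, hcθ⟩ := exists_growth_rate hπ hθ1 hθγ
  have hstep (n : ℕ) :
      ‖ghCasoratian π (p ^ r) u v (n + 1) + ghCasoratian π (p ^ r) u v n‖ < ‖u - v‖ :=
    (norm_ghCasoratian_succ_add_le hp (hu.trans hγ.le) (hv.trans hγ.le) hπc (hu.trans hγc)
      (hv.trans hγc) n).trans_lt <| mul_lt_of_lt_one_left (norm_pos_iff.2 (sub_ne_zero.2 hne))
        (pow_lt_one₀ (mul_nonneg (by positivity) hθ0) hcθ n.succ_ne_zero)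
  induction n with
  | zero => rw [ghCasoratian_zero _ hπ0]
  | succ n ih =>
    exact (IsUltrametricDist.norm_eq_of_add_norm_lt_max
      ((hstep n).trans_le (ih ▸ le_max_right _ _))).trans ih

lemma norm_ghphi1_mul_ghphi0_sub [CompleteSpace C] (hp : p.Prime) (hr : r ≠ 0)
    (hpπ : ‖(p : C)‖ ≤ ‖π‖) (hπ0 : π ≠ 0) (hπ1 : ‖π‖ < 1) (hγ : γ < 1) (hu : ‖u‖ ≤ γ)
    (hv : ‖v‖ ≤ γ) (huv : ‖u - v‖ ^ (p ^ r - 1) * γ ^ 2 < ‖π‖) :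
    ‖ghphi1 π (p ^ r) u * ghphi0 π (p ^ r) v - ghphi0 π (p ^ r) u * ghphi1 π (p ^ r) v‖ =
      ‖u - v‖ := by
  have hlim := (tendsto_ghCasoratian (Nat.one_lt_pow hr hp.one_lt) hπ0 hπ1.le
    (hu.trans_lt hγ) (hv.trans_lt hγ)).norm
  simp only [norm_ghCasoratian hp hr hpπ hπ0 hπ1 hγ hu hv huv] at hlim
  exact tendsto_nhds_unique hlim tendsto_const_nhds

end Casoratian

end Ultrametric

theorem gross_hopkins_injective_around_general {C : Type*} [NormedField C] [IsUltrametricDist C]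
    [CompleteSpace C] {p r : ℕ} (hp : p.Prime) (hr : r ≠ 0) {π u₀ u u' : C}
    (hpπ : ‖(p : C)‖ ≤ ‖π‖) (hπ0 : 0 < ‖π‖)
    (hlow : ‖π‖ ^ ((1 : ℝ) / ((p ^ r : ℕ) + 1)) ≤ ‖u₀‖) (hup : ‖u₀‖ < 1)
    (hu : ‖u - u₀‖ < (‖π‖ * ‖u₀‖ ^ (-(2 : ℝ))) ^ ((1 : ℝ) / ((p ^ r : ℕ) - 1)))
    (hu' : ‖u' - u₀‖ < (‖π‖ * ‖u₀‖ ^ (-(2 : ℝ))) ^ ((1 : ℝ) / ((p ^ r : ℕ) - 1)))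
    (heq : ghphi0 π (p ^ r) u * ghphi1 π (p ^ r) u' =
      ghphi1 π (p ^ r) u * ghphi0 π (p ^ r) u') : u = u' := by
  have hq : 1 < p ^ r := Nat.one_lt_pow hr hp.one_lt
  have hq0 : p ^ r ≠ 0 := pow_ne_zero r hp.ne_zero
  have hγ0 : 0 < ‖u₀‖ := (Real.rpow_pos_of_pos hπ0 _).trans_le hlow
  have hlow' : ‖π‖ ≤ ‖u₀‖ ^ (p ^ r + 1) := le_pow_of_rpow_le hπ0.le hγ0.le hlow
  have hπ1 : ‖π‖ < 1 := hlow'.trans_lt (pow_lt_one₀ hγ0.le hup (by lia))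
  have hdiff : ‖u - u'‖ < (‖π‖ * ‖u₀‖ ^ (-(2 : ℝ))) ^ ((1 : ℝ) / ((p ^ r : ℕ) - 1)) := by
    rw [← sub_sub_sub_cancel_right u u' u₀]
    exact (norm_sub_le_max_norm _ _).trans_lt (max_lt hu hu')
  have hpow {w : C} (hw : ‖w‖ < (‖π‖ * ‖u₀‖ ^ (-(2 : ℝ))) ^ ((1 : ℝ) / ((p ^ r : ℕ) - 1))) :
      ‖w‖ ^ (p ^ r - 1) * ‖u₀‖ ^ 2 < ‖π‖ :=
    pow_mul_sq_lt_of_lt_rpow hq hπ0.le hγ0 (norm_nonneg w) hw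
  have hnorm := norm_ghphi1_mul_ghphi0_sub hp hr hpπ (norm_pos_iff.1 hπ0) hπ1 hup
    (norm_le_norm_center hq0 hlow' (hpow hu)) (norm_le_norm_center hq0 hlow' (hpow hu'))
    (hpow hdiff)
  rwa [heq, sub_self, norm_zero, eq_comm, norm_sub_eq_zero_iff] at hnorm

theorem gross_hopkins_injective_around {p : ℕ} [Fact p.Prime] {C : Type*} [NormedField C] [IsUltrametricDist C]
    [CompleteSpace C] [IsAlgClosed C] [Algebra ℚ_[p] C]
    (hiso : ∀ x : ℚ_[p], ‖algebraMap ℚ_[p] C x‖ = ‖x‖)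
    (K : IntermediateField ℚ_[p] C) (hKfin : FiniteDimensional ℚ_[p] K)
    (q : ℕ) (hq : ∃ r : ℕ, 0 < r ∧ q = p ^ r)
    (π : C) (hπK : π ∈ K) (hπ0 : 0 < ‖π‖) (hπ1 : ‖π‖ < 1)
    (hπunif : ∀ x ∈ K, ‖x‖ < 1 → ‖x‖ ≤ ‖π‖)
    (hres : ∃ S : Finset C, S.card = q ∧ (∀ s ∈ S, s ∈ K ∧ ‖s‖ ≤ 1) ∧
      (∀ x ∈ K, ‖x‖ ≤ 1 → ∃ s ∈ S, ‖x - s‖ < 1) ∧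
      (∀ s ∈ S, ∀ t ∈ S, s ≠ t → ‖s - t‖ = 1))
    (u0 : C) (γ : ℝ) (hγ : γ = ‖u0‖)
    (hlow : ‖π‖ ^ ((1:ℝ)/(q+1)) ≤ γ) (hup : γ < 1) :
    ∀ u u' : C,
      ‖u - u0‖ < (‖π‖ * γ ^ (-(2:ℝ))) ^ ((1:ℝ)/((q:ℝ)-1)) →
      ‖u' - u0‖ < (‖π‖ * γ ^ (-(2:ℝ))) ^ ((1:ℝ)/((q:ℝ)-1)) →
      ghphi0 π q u * ghphi1 π q u' = ghphi1 π q u * ghphi0 π q u' → u = u' := by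
  obtain ⟨r, hr, rfl⟩ := hq
  have hpπ : ‖(p : C)‖ ≤ ‖π‖ := hπunif _ (natCast_mem K p) (norm_prime_lt_one_of_isometry hiso)
  exact fun _ _ ↦ hγ ▸ gross_hopkins_injective_around_general Fact.out hr.ne' hpπ hπ0
    (hγ ▸ hlow) (hγ ▸ hup)
end

section
/- Let s ≥ 1 be an odd integer, let γ be a real number with |π|^{1/(q^s+q^{s-1})} < γ < |π|^{1/(q^{s+2}+q^{s+1})}, and let u_0 ∈ ℂ_p with |u_0| = γ. Then the map u ↦ φ_1(u)/φ_0(u) is a bijection from the open disk {u ∈ ℂ_p : |u − u_0| < (|π|·γ^{-2})^{1/(q-1)}} onto the open disk {w ∈ ℂ_p : |w − φ_1(u_0)/φ_0(u_0)| < |π|^{s+1+1/(q-1)}·γ^{-2q^{s+1}/(q-1)}}. -/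
open Filter


/-!
Write `F = (φ₀, φ₁)`. The recursion of the quasi-logarithm gives a functional equation expressing
`F(u)` through `F(u ^ q)` and `F(u ^ q ^ 2)`. Iterating it on the annulus containing `u₀` reduces to
the disk where `φ₀` is close to `1`, and shows that `φ₀` is there dominated by one explicit
monomial, hence nearly constant on the disk around `u₀`.

The difference of `φ₁ / φ₀` at `u` and `v` is `φ₁(u) φ₀(v) - φ₁(v) φ₀(u)` divided by `φ₀(u) φ₀(v)`.
This Wronskian equals `u - v` up to a small relative error: the functional equation rewrites it as
`u - v` plus terms that contain differences of `q`-th powers, and on disks of radius below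
`(|π| / γ ^ 2) ^ (1 / (q - 1))` raising to the `q`-th power contracts enough to absorb the
denominators `π`. Hence `φ₀(u₀) ^ 2 • φ₁ / φ₀` differs from the identity by a strict
contraction on every smaller closed disk, and fixed-point iteration shows that it maps the open disk
bijectively onto the open disk of the same radius.
-/

namespace GrossHopkins

section Ultrametric

instance instIsUltrametricDistProd {X Y : Type*} [PseudoMetricSpace X] [PseudoMetricSpace Y]
    [IsUltrametricDist X] [IsUltrametricDist Y] : IsUltrametricDist (X × Y) where
  dist_triangle_max x y z := by
    simp only [Prod.dist_eq]
    exact (max_le_max (dist_triangle_max x.1 y.1 z.1) (dist_triangle_max x.2 y.2 z.2)).trans_eq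
      (max_max_max_comm _ _ _ _)

section AddGroup

variable {E : Type*} [NormedAddCommGroup E] [IsUltrametricDist E]

lemma norm_add_le_of_norm_le {x y : E} {c : ℝ} (hx : ‖x‖ ≤ c) (hy : ‖y‖ ≤ c) : ‖x + y‖ ≤ c :=
  (IsUltrametricDist.norm_add_le_max x y).trans (max_le hx hy)

lemma norm_sub_le_of_norm_le {x y : E} {c : ℝ} (hx : ‖x‖ ≤ c) (hy : ‖y‖ ≤ c) : ‖x - y‖ ≤ c := by
  rw [sub_eq_add_neg]
  exact norm_add_le_of_norm_le hx (by rwa [norm_neg])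

/-- `x` approximates `y` with relative error at most `θ`. For `θ < 1` this makes `x` and `y` equal
in norm, and it is an equivalence relation compatible with products. -/
def RelClose {E : Type*} [NormedAddCommGroup E] (θ : ℝ) (x y : E) : Prop :=
  ‖x - y‖ ≤ θ * ‖y‖

namespace RelClose

variable {θ : ℝ} {x y z : E}

lemma norm_eq (hθ : θ < 1) (h : RelClose θ x y) : ‖x‖ = ‖y‖ := by
  rcases eq_or_ne y 0 with rfl | hy
  · have : ‖x‖ ≤ 0 := by simpa [RelClose] using h
    rw [norm_zero, this.antisymm (norm_nonneg x)]
  have hlt : ‖x - y‖ < ‖y‖ := h.trans_lt (mul_lt_of_lt_one_left (norm_pos_iff.2 hy) hθ)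
  have := IsUltrametricDist.norm_add_eq_max_of_norm_ne_norm hlt.ne
  rwa [sub_add_cancel, max_eq_right hlt.le] at this

lemma symm (hθ : θ < 1) (h : RelClose θ x y) : RelClose θ y x := by
  rw [RelClose, norm_sub_rev, h.norm_eq hθ]
  exact h

lemma trans (hθ : θ < 1) (hxy : RelClose θ x y) (hyz : RelClose θ y z) : RelClose θ x z := by
  rw [RelClose, ← sub_add_sub_cancel x y z]
  exact norm_add_le_of_norm_le (hyz.norm_eq hθ ▸ hxy) hyz

end RelClose

/-- The fixed-point iteration `u ↦ u - (f u - w)` maps the closed ball into itself and contracts. -/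
lemma surjOn_closedBall_of_relClose [CompleteSpace E] {f : E → E} {a : E} {ρ θ : ℝ} (hθ : θ < 1)
    (hf : ∀ u ∈ Metric.closedBall a ρ, ∀ v ∈ Metric.closedBall a ρ,
      RelClose θ (f u - f v) (u - v)) :
    Set.SurjOn f (Metric.closedBall a ρ) (Metric.closedBall (f a) ρ) := by
  intro w hw
  have ha : a ∈ Metric.closedBall a ρ := Metric.mem_closedBall_self (dist_nonneg.trans hw)
  let T : E → E := fun u => u - (f u - w)
  have hT : ∀ u v, T u - T v = -((f u - f v) - (u - v)) := fun u v => by simp only [T]; abel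
  have hmaps : Set.MapsTo T (Metric.closedBall a ρ) (Metric.closedBall a ρ) := by
    intro u hu
    have hTu : T u - a = (w - f a) - ((f u - f a) - (u - a)) := by simp only [T]; abel
    rw [mem_closedBall_iff_norm] at hu hw ⊢
    rw [hTu]
    refine norm_sub_le_of_norm_le hw (le_trans (hf u (mem_closedBall_iff_norm.2 hu) a ha) ?_)
    exact (mul_le_of_le_one_left (norm_nonneg _) hθ.le).trans hu
  have hcontr : ContractingWith θ.toNNReal (hmaps.restrict T _ _) := by
    refine ⟨by simpa using hθ, LipschitzWith.of_dist_le_mul fun x y => ?_⟩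
    rw [Subtype.dist_eq, Subtype.dist_eq, dist_eq_norm, dist_eq_norm,
      Set.MapsTo.val_restrict_apply, Set.MapsTo.val_restrict_apply, hT, norm_neg]
    refine le_trans (hf x x.2 y y.2) ?_
    gcongr
    exact Real.le_coe_toNNReal θ
  obtain ⟨u, hu, hfix, -⟩ := hcontr.exists_fixedPoint' Metric.isClosed_closedBall.isComplete
    hmaps ha (edist_ne_top _ _)
  exact ⟨u, hu, sub_eq_zero.1 (sub_eq_self.1 hfix)⟩

lemma bijOn_ball_of_relClose [CompleteSpace E] {f : E → E} {a : E} {r : ℝ}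
    (hf : ∀ ρ ∈ Set.Ico 0 r, ∃ θ < 1, ∀ u ∈ Metric.closedBall a ρ, ∀ v ∈ Metric.closedBall a ρ,
      RelClose θ (f u - f v) (u - v)) :
    Set.BijOn f (Metric.ball a r) (Metric.ball (f a) r) := by
  have hiso : ∀ u ∈ Metric.ball a r, ∀ v ∈ Metric.ball a r, ‖f u - f v‖ = ‖u - v‖ := by
    intro u hu v hv
    obtain ⟨θ, hθ, h⟩ := hf _ ⟨dist_nonneg.trans (le_max_left _ _), max_lt hu hv⟩
    exact (h u (Metric.mem_closedBall.2 (le_max_left _ _)) v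
      (Metric.mem_closedBall.2 (le_max_right _ _))).norm_eq hθ
  refine ⟨fun u hu => ?_, fun u hu v hv huv => ?_, fun w hw => ?_⟩
  · have ha : a ∈ Metric.ball a r := Metric.mem_ball_self (dist_nonneg.trans_lt hu)
    rwa [mem_ball_iff_norm, hiso u hu a ha, ← mem_ball_iff_norm]
  · rw [← sub_eq_zero, ← norm_eq_zero, ← hiso u hu v hv, huv, sub_self, norm_zero]
  · obtain ⟨θ, hθ, h⟩ := hf _ ⟨dist_nonneg, hw⟩
    obtain ⟨u, hu, rfl⟩ := surjOn_closedBall_of_relClose hθ h (Metric.mem_closedBall.2 le_rfl)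
    exact ⟨u, (Metric.mem_closedBall.1 hu).trans_lt hw, rfl⟩

end AddGroup

section Field

variable {C : Type*} [NormedField C]

lemma RelClose.div_right {θ : ℝ} {x y : C} (h : RelClose θ x y) (z : C) :
    RelClose θ (x / z) (y / z) := by
  rw [RelClose, ← sub_div, norm_div, norm_div, ← mul_div_assoc]
  gcongr
  exact h

lemma norm_pow_lt_one {u : C} (hu : ‖u‖ < 1) {q : ℕ} (hq : q ≠ 0) : ‖u ^ q‖ < 1 := by
  rw [norm_pow]
  exact pow_lt_one₀ (norm_nonneg u) hu hq

variable [IsUltrametricDist C]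

open scoped Pointwise in
lemma bijOn_ball_of_relClose_mul [CompleteSpace C] {f : C → C} {a l : C} (hl : l ≠ 0) {r : ℝ}
    (hf : ∀ ρ ∈ Set.Ico 0 r, ∃ θ < 1, ∀ u ∈ Metric.closedBall a ρ, ∀ v ∈ Metric.closedBall a ρ,
      RelClose θ (l * (f u - f v)) (u - v)) :
    Set.BijOn f (Metric.ball a r) (Metric.ball (f a) (r / ‖l‖)) := by
  simp only [mul_sub] at hf
  have hscale : l⁻¹ • Metric.ball (l * f a) r = Metric.ball (f a) (r / ‖l‖) := by
    rw [smul_ball (inv_ne_zero hl), smul_eq_mul, inv_mul_cancel_left₀ hl, norm_inv,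
      inv_mul_eq_div]
  rw [← hscale]
  have hbij := bijOn_ball_of_relClose hf
  have hinj : Function.Injective (fun x : C => l⁻¹ • x) := smul_right_injective C (inv_ne_zero hl)
  refine (hinj.injOn.bijOn_image.comp hbij).congr fun u _ => ?_
  simp only [Function.comp_apply, smul_eq_mul, inv_mul_cancel_left₀ hl]

namespace RelClose

variable {θ : ℝ} {x x' y y' : C}

lemma mul (hθ : θ < 1) (hx : RelClose θ x x') (hy : RelClose θ y y') :
    RelClose θ (x * y) (x' * y') := by
  have hsplit : x * y - x' * y' = (x - x') * y + x' * (y - y') := by ring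
  rw [RelClose, hsplit]
  refine norm_add_le_of_norm_le ?_ ?_
  · rw [norm_mul, norm_mul, hy.norm_eq hθ, ← mul_assoc]
    gcongr
    exact hx
  · rw [norm_mul, norm_mul, mul_left_comm]
    gcongr
    exact hy

lemma pow (hθ0 : 0 ≤ θ) (hθ : θ < 1) (h : RelClose θ x y) (n : ℕ) :
    RelClose θ (x ^ n) (y ^ n) := by
  induction n with
  | zero => simpa [RelClose] using hθ0
  | succ n ih => simpa only [pow_succ] using ih.mul hθ h

end RelClose

lemma norm_pow_sub_pow_le_pow_mul {u v : C} {γ : ℝ} (hu : ‖u‖ ≤ γ) (hv : ‖v‖ ≤ γ) (n : ℕ) :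
    ‖u ^ n - v ^ n‖ ≤ γ ^ (n - 1) * ‖u - v‖ := by
  have hγ : 0 ≤ γ := (norm_nonneg u).trans hu
  rw [← (Commute.all u v).geom_sum₂_mul, norm_mul]
  gcongr
  refine IsUltrametricDist.norm_sum_le_of_forall_le_of_nonneg (by positivity) fun i hi => ?_
  have hin : i + (n - 1 - i) = n - 1 := by rw [Finset.mem_range] at hi; omega
  rw [norm_mul, norm_pow, norm_pow, ← hin, pow_add, add_tsub_cancel_left]
  gcongr

lemma norm_pow_prime_pow_sub_le {p : ℕ} (hp : p.Prime) (r : ℕ) {u v : C} {γ : ℝ}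
    (hu : ‖u‖ ≤ γ) (hv : ‖v‖ ≤ γ) :
    ‖u ^ p ^ r - v ^ p ^ r‖ ≤
      max (‖u - v‖ ^ p ^ r) (‖(p : C)‖ * (γ ^ (p ^ r - 1) * ‖u - v‖)) := by
  have hγ : 0 ≤ γ := (norm_nonneg u).trans hu
  obtain ⟨h, rfl⟩ : ∃ h, u = v + h := ⟨u - v, by ring⟩
  have hh : ‖h‖ ≤ γ := by simpa using norm_sub_le_of_norm_le hu hv
  rw [add_sub_cancel_left, add_pow_prime_pow_eq hp, add_assoc, add_sub_cancel_left]
  refine (IsUltrametricDist.norm_add_le_max _ _).trans (max_le_max (norm_pow _ _).le ?_)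
  simp only [mul_assoc (p : C)]
  rw [norm_mul, Finset.mul_sum]
  gcongr
  refine IsUltrametricDist.norm_sum_le_of_forall_le_of_nonneg (by positivity) fun k hk => ?_
  have hexp : p ^ r - 1 = (k - 1) + (p ^ r - k - 1) + 1 := by rw [Finset.mem_Ioo] at hk; omega
  calc ‖v * h * (v ^ (k - 1) * h ^ (p ^ r - k - 1) * ((p ^ r).choose k / p : ℕ))‖
      = ‖v‖ ^ (k - 1) * ‖h‖ ^ (p ^ r - k - 1) * ‖v‖ * ‖h‖ *
          ‖(((p ^ r).choose k / p : ℕ) : C)‖ := by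
        simp only [norm_mul, norm_pow]; ring
    _ ≤ γ ^ (k - 1) * γ ^ (p ^ r - k - 1) * γ * ‖h‖ * 1 := by
        gcongr
        exact IsUltrametricDist.norm_natCast_le_one C _
    _ = γ ^ (p ^ r - 1) * ‖h‖ := by rw [hexp, pow_succ, pow_add, mul_one]

end Field

end Ultrametric

section Truncation

section Field

variable {C : Type*} [NormedField C] {π : C} {q : ℕ}

/-- The linear map `(a, b) ↦ (b / π, a)`. The recursion of the quasi-logarithm says that the vector
`F = (φ₀, φ₁)` satisfies `F(u) = u • twist π (F(u ^ q)) + F(u ^ q ^ 2)`. -/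
noncomputable def twist (π : C) : C × C →L[C] C × C :=
  (π⁻¹ • ContinuousLinearMap.snd C C C).prod (ContinuousLinearMap.fst C C C)

lemma twist_apply (π : C) (x : C × C) : twist π x = (x.2 / π, x.1) := by
  simp only [twist, ContinuousLinearMap.prod_apply, smul_apply, ContinuousLinearMap.coe_snd',
    ContinuousLinearMap.coe_fst', smul_eq_mul, inv_mul_eq_div]

/-- The `N`-th approximation to `(φ₀(u), φ₁(u))`, whose coordinates are the terms with index at most
`N` of the two interleaved sequences `π ^ k * m_{2k}(u)` and `π ^ k * m_{2k - 1}(u)`. -/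
noncomputable def trunc (π : C) (q : ℕ) : ℕ → C → C × C
  | 0, _ => (1, 0)
  | 1, u => (1, u)
  | N + 2, u => u • twist π (trunc π q (N + 1) (u ^ q)) + trunc π q N ((u ^ q) ^ q)

lemma trunc_zero (u : C) : trunc π q 0 u = (1, 0) := rfl

lemma trunc_one (u : C) : trunc π q 1 u = (1, u) := rfl

lemma trunc_add_two (N : ℕ) (u : C) :
    trunc π q (N + 2) u =
      u • twist π (trunc π q (N + 1) (u ^ q)) + trunc π q N ((u ^ q) ^ q) := rfl

lemma trunc_add_two_fst (N : ℕ) (u : C) :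
    (trunc π q (N + 2) u).1 =
      u / π * (trunc π q (N + 1) (u ^ q)).2 + (trunc π q N ((u ^ q) ^ q)).1 := by
  rw [trunc_add_two, twist_apply, Prod.fst_add, Prod.smul_fst, smul_eq_mul, mul_div_left_comm,
    mul_comm, div_mul_eq_mul_div, mul_div_assoc]

lemma trunc_add_two_snd (N : ℕ) (u : C) :
    (trunc π q (N + 2) u).2 =
      u * (trunc π q (N + 1) (u ^ q)).1 + (trunc π q N ((u ^ q) ^ q)).2 := by
  rw [trunc_add_two, twist_apply, Prod.snd_add, Prod.smul_snd, smul_eq_mul]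

lemma ghm_add_two (k : ℕ) (u : C) :
    ghm π q (k + 2) u = u / π * ghm π q (k + 1) (u ^ q) + 1 / π * ghm π q k ((u ^ q) ^ q) := by
  rw [ghm, ← pow_mul, ← sq]

lemma trunc_eq_ghm (hπ : π ≠ 0) (k : ℕ) (u : C) :
    trunc π q (2 * k + 1) u = (π ^ k * ghm π q (2 * k) u, π ^ (k + 1) * ghm π q (2 * k + 1) u) ∧
      trunc π q (2 * k + 2) u =
        (π ^ (k + 1) * ghm π q (2 * k + 2) u, π ^ (k + 1) * ghm π q (2 * k + 1) u) := by
  induction k generalizing u with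
  | zero =>
    rw [trunc_add_two, trunc_one, trunc_zero, trunc_one, twist_apply]
    simp only [ghm]
    constructor <;> ext <;> simp <;> field_simp
  | succ k ih =>
    have hodd : ∀ u, trunc π q (2 * k + 3) u =
        (π ^ (k + 1) * ghm π q (2 * k + 2) u, π ^ (k + 2) * ghm π q (2 * k + 3) u) := by
      intro u
      ext
      · rw [trunc_add_two_fst, (ih _).1, (ih _).2, ghm_add_two (2 * k) u]
        field_simp
        ring
      · rw [trunc_add_two_snd, (ih _).1, (ih _).2, ghm_add_two (2 * k + 1) u]
        field_simp
        ring
    refine ⟨hodd u, ?_⟩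
    rw [Nat.mul_succ]
    ext
    · rw [trunc_add_two_fst, hodd, (ih _).2, ghm_add_two (2 * k + 2) u]
      field_simp
      ring
    · rw [trunc_add_two_snd, hodd, (ih _).2, ghm_add_two (2 * k + 1) u]
      field_simp
      ring

lemma tendsto_trunc_of_tendsto {u : C} {l₁ l₂ : C × C}
    (h₁ : Tendsto (fun N => trunc π q N (u ^ q)) atTop (nhds l₁))
    (h₂ : Tendsto (fun N => trunc π q N ((u ^ q) ^ q)) atTop (nhds l₂)) :
    Tendsto (fun N => trunc π q N u) atTop (nhds (u • twist π l₁ + l₂)) := by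
  refine (tendsto_add_atTop_iff_nat 2).1 ?_
  exact ((((twist π).continuous.tendsto l₁).comp
    ((tendsto_add_atTop_iff_nat 1).2 h₁)).const_smul u).add h₂

lemma norm_smul_twist_le (hπ0 : 0 < ‖π‖) (hπ1 : ‖π‖ < 1) {u : C} (hu : ‖u‖ ≤ ‖π‖) (x : C × C) :
    ‖u • twist π x‖ ≤ ‖x‖ := by
  rw [norm_smul, twist_apply, Prod.norm_def, norm_div]
  refine (mul_le_mul_of_nonneg_right hu (by positivity)).trans ?_
  rw [mul_max_of_nonneg _ _ hπ0.le, mul_div_cancel₀ _ hπ0.ne']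
  exact max_le (norm_snd_le x)
    ((mul_le_of_le_one_left (norm_nonneg _) hπ1.le).trans (norm_fst_le x))

lemma norm_pow_le_sq (hq : 2 ≤ q) {u : C} (hu : ‖u‖ ≤ 1) : ‖u ^ q‖ ≤ ‖u‖ ^ 2 := by
  rw [norm_pow]
  exact pow_le_pow_of_le_one (norm_nonneg _) hu hq

lemma norm_pow_le_self (hq : q ≠ 0) {u : C} (hu : ‖u‖ ≤ 1) : ‖u ^ q‖ ≤ ‖u‖ := by
  rw [norm_pow]
  exact pow_le_of_le_one (norm_nonneg _) hu hq

end Field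

variable {C : Type*} [NormedField C] [IsUltrametricDist C] {π : C} {q : ℕ}

lemma norm_trunc_succ_sub_le (hπ0 : 0 < ‖π‖) (hπ1 : ‖π‖ < 1) (hq : 2 ≤ q) (N : ℕ) {u : C}
    (hu : ‖u‖ ≤ ‖π‖) : ‖trunc π q (N + 1) u - trunc π q N u‖ ≤ ‖u‖ ^ (N + 1) := by
  induction N using Nat.twoStepInduction generalizing u with
  | zero => simp [trunc_zero, trunc_one]
  | one =>
    have hdiff : trunc π q 2 u - trunc π q 1 u = u • twist π (0, u ^ q) := by
      simp [trunc_add_two, trunc_zero, trunc_one, twist_apply]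
    rw [hdiff]
    refine (norm_smul_twist_le hπ0 hπ1 hu _).trans ?_
    simpa using norm_pow_le_sq hq (hu.trans hπ1.le)
  | more N ih₁ ih₂ =>
    have hu1 : ‖u‖ ≤ 1 := hu.trans hπ1.le
    have huq : ‖u ^ q‖ ≤ ‖u‖ := norm_pow_le_self (by omega) hu1
    have huqq : ‖(u ^ q) ^ q‖ ≤ ‖u ^ q‖ := norm_pow_le_self (by omega) (huq.trans hu1)
    have hbound : ∀ j n : ℕ, N + 3 ≤ j * n → (‖u‖ ^ j) ^ n ≤ ‖u‖ ^ (N + 3) := by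
      intro j n hjn
      rw [← pow_mul]
      exact pow_le_pow_of_le_one (norm_nonneg _) hu1 hjn
    have hsq : ‖u ^ q‖ ≤ ‖u‖ ^ 2 := norm_pow_le_sq hq hu1
    have hsq' : ‖(u ^ q) ^ q‖ ≤ ‖u‖ ^ 4 :=
      calc ‖(u ^ q) ^ q‖ ≤ ‖u ^ q‖ ^ 2 := norm_pow_le_sq hq (huq.trans hu1)
        _ ≤ (‖u‖ ^ 2) ^ 2 := by gcongr
        _ = ‖u‖ ^ 4 := by ring
    have hdiff : trunc π q (N + 3) u - trunc π q (N + 2) u =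
        u • twist π (trunc π q (N + 2) (u ^ q) - trunc π q (N + 1) (u ^ q)) +
          (trunc π q (N + 1) ((u ^ q) ^ q) - trunc π q N ((u ^ q) ^ q)) := by
      rw [trunc_add_two (N + 1), trunc_add_two N u, add_sub_add_comm, ← smul_sub, ← map_sub]
    rw [hdiff]
    refine norm_add_le_of_norm_le ((norm_smul_twist_le hπ0 hπ1 hu _).trans ?_) ?_
    · exact (ih₂ (huq.trans hu)).trans
        ((pow_le_pow_left₀ (norm_nonneg _) hsq _).trans (hbound _ _ (by omega)))
    · exact (ih₁ (huqq.trans (huq.trans hu))).trans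
        ((pow_le_pow_left₀ (norm_nonneg _) hsq' _).trans (hbound _ _ (by omega)))

variable [CompleteSpace C]

lemma exists_tendsto_trunc (hπ0 : 0 < ‖π‖) (hπ1 : ‖π‖ < 1) (hq : 2 ≤ q) {u : C} (hu : ‖u‖ < 1) :
    ∃ l, Tendsto (fun N => trunc π q N u) atTop (nhds l) := by
  obtain ⟨n, hn⟩ : ∃ n, ‖u‖ ^ q ^ n ≤ ‖π‖ := by
    obtain ⟨n, hn⟩ := exists_pow_lt_of_lt_one hπ0 hu
    exact ⟨n, (pow_le_pow_of_le_one (norm_nonneg _) hu.le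
      (Nat.lt_pow_self (by omega)).le).trans hn.le⟩
  induction n generalizing u with
  | zero =>
    rw [pow_zero, pow_one] at hn
    refine cauchySeq_tendsto_of_complete (cauchySeq_of_le_geometric ‖u‖ ‖u‖ hu fun N => ?_)
    rw [dist_comm, dist_eq_norm, ← pow_succ']
    exact norm_trunc_succ_sub_le hπ0 hπ1 hq N hn
  | succ n ih =>
    have huq : ‖u ^ q‖ < 1 := norm_pow_lt_one hu (by omega)
    have hn₁ : ‖u ^ q‖ ^ q ^ n ≤ ‖π‖ := by rwa [norm_pow, ← pow_mul, ← pow_succ']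
    have hn₂ : ‖(u ^ q) ^ q‖ ^ q ^ n ≤ ‖π‖ :=
      (pow_le_pow_left₀ (norm_nonneg _) (norm_pow_le_self (by omega) huq.le) _).trans hn₁
    obtain ⟨l₁, hl₁⟩ := ih huq hn₁
    obtain ⟨l₂, hl₂⟩ := ih (norm_pow_lt_one huq (by omega)) hn₂
    exact ⟨_, tendsto_trunc_of_tendsto hl₁ hl₂⟩

lemma tendsto_trunc (hπ0 : 0 < ‖π‖) (hπ1 : ‖π‖ < 1) (hq : 2 ≤ q) {u : C} (hu : ‖u‖ < 1) :
    Tendsto (fun N => trunc π q N u) atTop (nhds (ghphi0 π q u, ghphi1 π q u)) := by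
  obtain ⟨l, hl⟩ := exists_tendsto_trunc hπ0 hπ1 hq hu
  have hodd : Tendsto (fun k => trunc π q (2 * k + 1) u) atTop (nhds l) :=
    hl.comp (tendsto_atTop_mono (fun k => by simp only [id]; omega) tendsto_id)
  simp only [(trunc_eq_ghm (norm_pos_iff.1 hπ0) _ u).1] at hodd
  have h₀ : ghphi0 π q u = l.1 := hodd.fst_nhds.limUnder_eq
  have h₁ : ghphi1 π q u = l.2 := hodd.snd_nhds.limUnder_eq
  rwa [h₀, h₁]

lemma ghphi_functional_equation (hπ0 : 0 < ‖π‖) (hπ1 : ‖π‖ < 1) (hq : 2 ≤ q) {u : C}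
    (hu : ‖u‖ < 1) :
    ghphi0 π q u = u / π * ghphi1 π q (u ^ q) + ghphi0 π q ((u ^ q) ^ q) ∧
      ghphi1 π q u = u * ghphi0 π q (u ^ q) + ghphi1 π q ((u ^ q) ^ q) := by
  have huq : ‖u ^ q‖ < 1 := norm_pow_lt_one hu (by omega)
  have h₀ := tendsto_trunc hπ0 hπ1 hq hu
  have h₁ := tendsto_trunc hπ0 hπ1 hq huq
  have h₂ := tendsto_trunc hπ0 hπ1 hq (norm_pow_lt_one huq (by omega : q ≠ 0))
  have h : (ghphi0 π q u, ghphi1 π q u) =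
      u • twist π (ghphi0 π q (u ^ q), ghphi1 π q (u ^ q)) +
        (ghphi0 π q ((u ^ q) ^ q), ghphi1 π q ((u ^ q) ^ q)) :=
    tendsto_nhds_unique h₀ (tendsto_trunc_of_tendsto h₁ h₂)
  rw [twist_apply, Prod.ext_iff] at h
  simpa only [Prod.fst_add, Prod.snd_add, Prod.smul_fst, Prod.smul_snd, smul_eq_mul,
    mul_div_left_comm u, div_mul_eq_mul_div, mul_div_assoc] using h

end Truncation

section ClosePair

variable {C : Type*} [NormedField C]

/-- Up to errors of relative size `ϖ`, the map `u ↦ u ^ q` behaves like the `q`-th power Frobenius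
in characteristic `p`. -/
def IsFrobeniusModulo (C : Type*) [NormedField C] (ϖ : ℝ) (q : ℕ) : Prop :=
  ∀ (u v : C) (γ : ℝ), ‖u‖ ≤ γ → ‖v‖ ≤ γ →
    ‖u ^ q - v ^ q‖ ≤ max (‖u - v‖ ^ q) (ϖ * (γ ^ (q - 1) * ‖u - v‖))

lemma isFrobeniusModulo_prime_pow [IsUltrametricDist C] {p : ℕ} (hp : p.Prime) {ϖ : ℝ}
    (hϖ : ‖(p : C)‖ ≤ ϖ) (r : ℕ) : IsFrobeniusModulo C ϖ (p ^ r) := by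
  intro u v γ hu hv
  have hγ : 0 ≤ γ := (norm_nonneg u).trans hu
  exact (norm_pow_prime_pow_sub_le hp r hu hv).trans (max_le_max_left _ (by gcongr))

/-- The pairs `u, v` in the closed disk of radius `γ` whose distance is below the critical radius
`(ϖ / γ ^ 2) ^ (1 / (q - 1))` by a margin `θ`; the definition is arranged to be stable under
`u, v ↦ u ^ q, v ^ q`. -/
structure IsClosePair (ϖ : ℝ) (q : ℕ) (θ γ : ℝ) (u v : C) : Prop where
  norm_left_le : ‖u‖ ≤ γ
  norm_right_le : ‖v‖ ≤ γ
  radius_pow_le : γ ^ (q + 1) ≤ θ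
  margin_lt_one : θ < 1
  dist_pow_mul_le : ‖u - v‖ ^ (q - 1) * γ ^ 2 ≤ θ * ϖ

namespace IsClosePair

section Basic

variable {ϖ : ℝ} {q : ℕ} {θ γ : ℝ} {u v : C}

lemma radius_nonneg (h : IsClosePair ϖ q θ γ u v) : 0 ≤ γ :=
  (norm_nonneg u).trans h.norm_left_le

lemma margin_nonneg (h : IsClosePair ϖ q θ γ u v) : 0 ≤ θ :=
  (pow_nonneg h.radius_nonneg _).trans h.radius_pow_le

lemma radius_lt_one (h : IsClosePair ϖ q θ γ u v) : γ < 1 := by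
  by_contra! hγ
  exact (h.radius_pow_le.trans_lt h.margin_lt_one).not_ge (one_le_pow₀ hγ)

lemma radius_pow_le_radius (h : IsClosePair ϖ q θ γ u v) (hq : 2 ≤ q) : γ ^ q ≤ γ :=
  pow_le_of_le_one h.radius_nonneg h.radius_lt_one.le (by omega)

lemma symm (h : IsClosePair ϖ q θ γ u v) : IsClosePair ϖ q θ γ v u where
  norm_left_le := h.norm_right_le
  norm_right_le := h.norm_left_le
  radius_pow_le := h.radius_pow_le
  margin_lt_one := h.margin_lt_one
  dist_pow_mul_le := norm_sub_rev u v ▸ h.dist_pow_mul_le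

lemma sq_mul_norm_pow_sub_pow_le (h : IsClosePair ϖ q θ γ u v) (hC : IsFrobeniusModulo C ϖ q)
    (hϖ : 0 ≤ ϖ) (hq : 2 ≤ q) : γ ^ 2 * ‖u ^ q - v ^ q‖ ≤ θ * ϖ * ‖u - v‖ := by
  rcases le_max_iff.1 (hC u v γ h.norm_left_le h.norm_right_le) with hle | hle
  · calc γ ^ 2 * ‖u ^ q - v ^ q‖ ≤ γ ^ 2 * ‖u - v‖ ^ q := by gcongr
      _ = ‖u - v‖ ^ (q - 1) * γ ^ 2 * ‖u - v‖ := by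
        rw [← pow_sub_one_mul (by omega : q ≠ 0) ‖u - v‖]; ring
      _ ≤ θ * ϖ * ‖u - v‖ := mul_le_mul_of_nonneg_right h.dist_pow_mul_le (norm_nonneg _)
  · calc γ ^ 2 * ‖u ^ q - v ^ q‖ ≤ γ ^ 2 * (ϖ * (γ ^ (q - 1) * ‖u - v‖)) := by gcongr
      _ = γ ^ (q - 1 + 2) * ϖ * ‖u - v‖ := by ring
      _ = γ ^ (q + 1) * ϖ * ‖u - v‖ := by rw [show q - 1 + 2 = q + 1 by omega]
      _ ≤ θ * ϖ * ‖u - v‖ := by gcongr; exact h.radius_pow_le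

lemma pow (h : IsClosePair ϖ q θ γ u v) (hC : IsFrobeniusModulo C ϖ q) (hϖ0 : 0 ≤ ϖ)
    (hϖ1 : ϖ ≤ 1) (hq : 2 ≤ q) : IsClosePair ϖ q θ (γ ^ q) (u ^ q) (v ^ q) := by
  have hγ := h.radius_nonneg
  have hθ := h.margin_nonneg
  refine ⟨?_, ?_, ?_, h.margin_lt_one, ?_⟩
  · rw [norm_pow]; gcongr; exact h.norm_left_le
  · rw [norm_pow]; gcongr; exact h.norm_right_le
  · exact (pow_le_pow_left₀ (by positivity) (h.radius_pow_le_radius hq) _).trans h.radius_pow_le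
  · have hθϖ : θ * ϖ ≤ 1 := mul_le_one₀ h.margin_lt_one.le hϖ0 hϖ1
    have hexp : (q - 1) * 2 + 2 = q * 2 := by omega
    calc ‖u ^ q - v ^ q‖ ^ (q - 1) * (γ ^ q) ^ 2
        = (γ ^ 2 * ‖u ^ q - v ^ q‖) ^ (q - 1) * γ ^ 2 := by
          rw [← pow_mul, ← hexp, pow_add, mul_pow, mul_comm (q - 1), pow_mul]; ring
      _ ≤ (θ * ϖ * ‖u - v‖) ^ (q - 1) * γ ^ 2 := by
          gcongr ?_ ^ _ * _; exact h.sq_mul_norm_pow_sub_pow_le hC hϖ0 hq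
      _ ≤ ‖u - v‖ ^ (q - 1) * γ ^ 2 := by
          gcongr; exact mul_le_of_le_one_left (norm_nonneg _) hθϖ
      _ ≤ θ * ϖ := h.dist_pow_mul_le

end Basic

variable [IsUltrametricDist C] {ϖ : ℝ} {q : ℕ} {θ γ : ℝ} {u v : C}

lemma mul_norm_pow_sub_pow_le (h : IsClosePair ϖ q θ γ u v) (hC : IsFrobeniusModulo C ϖ q)
    (hϖ : 0 ≤ ϖ) (hq : 2 ≤ q) : γ * ‖u ^ q - v ^ q‖ ≤ θ * ϖ := by
  have hθ := h.margin_nonneg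
  rcases h.radius_nonneg.eq_or_lt with hγ | hγ
  · rw [← hγ, zero_mul]; positivity
  refine le_of_mul_le_mul_left ?_ hγ
  calc γ * (γ * ‖u ^ q - v ^ q‖) = γ ^ 2 * ‖u ^ q - v ^ q‖ := by ring
    _ ≤ θ * ϖ * ‖u - v‖ := h.sq_mul_norm_pow_sub_pow_le hC hϖ hq
    _ ≤ θ * ϖ * γ := by gcongr; exact norm_sub_le_of_norm_le h.norm_left_le h.norm_right_le
    _ = γ * (θ * ϖ) := mul_comm _ _

lemma norm_pow_pow_sub_pow_pow_le (h : IsClosePair ϖ q θ γ u v) (hq : 2 ≤ q) :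
    ‖(u ^ q) ^ q - (v ^ q) ^ q‖ ≤ θ * ‖u - v‖ := by
  have hγ := h.radius_nonneg
  have hexp : q * q - 1 = (q + 1) * (q - 1) := by simpa using Nat.mul_self_sub_mul_self_eq q 1
  rw [← pow_mul, ← pow_mul]
  refine (norm_pow_sub_pow_le_pow_mul h.norm_left_le h.norm_right_le _).trans ?_
  gcongr
  rw [hexp, pow_mul]
  exact (pow_le_of_le_one (by positivity) (pow_le_one₀ hγ h.radius_lt_one.le) (by omega)).trans
    h.radius_pow_le

end IsClosePair

end ClosePair

section Wronskian

variable {C : Type*} [NormedField C]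

/-- The two-point Wronskian `φ₁(u) φ₀(v) - φ₁(v) φ₀(u)` of the `N`-th approximations. -/
noncomputable def truncWronskian (π : C) (q N : ℕ) (u v : C) : C :=
  (trunc π q N u).2 * (trunc π q N v).1 - (trunc π q N v).2 * (trunc π q N u).1

/-- The determinant of the columns `F_{N+1}(u)` and `twist π (F_N(v ^ q))`, where
`F_N = trunc π q N`. It closes up the recursion satisfied by `truncWronskian`. -/
noncomputable def truncCross (π : C) (q N : ℕ) (u v : C) : C :=
  (trunc π q (N + 1) u).1 * (trunc π q N (v ^ q)).1 -
    (trunc π q (N + 1) u).2 * (trunc π q N (v ^ q)).2 / π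

lemma truncCross_succ (π : C) (q N : ℕ) (u v : C) :
    truncCross π q (N + 1) u v =
      truncCross π q N (v ^ q) (u ^ q) + u / π * truncWronskian π q (N + 1) (u ^ q) (v ^ q) := by
  simp only [truncCross, truncWronskian, trunc_add_two_fst, trunc_add_two_snd]
  ring

lemma truncWronskian_add_two (π : C) (q N : ℕ) (u v : C) :
    truncWronskian π q (N + 2) u v =
      u * truncCross π q N (u ^ q) (v ^ q) - v * truncCross π q N (v ^ q) (u ^ q) -
        u * v / π * truncWronskian π q (N + 1) (u ^ q) (v ^ q) +
          truncWronskian π q N ((u ^ q) ^ q) ((v ^ q) ^ q) := by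
  simp only [truncCross, truncWronskian, trunc_add_two_fst, trunc_add_two_snd]
  ring

/-- The estimates for a pair `u, v` which are propagated together from `N` to `N + 1`. -/
structure TruncEstimates (π : C) (q N : ℕ) (θ γ : ℝ) (u v : C) : Prop where
  cross_sub_one : ‖truncCross π q N u v - 1‖ ≤ θ
  cross_sub_cross :
    ‖π‖ * ‖truncCross π q N u v - truncCross π q N v u‖ ≤ γ * ‖u ^ q - v ^ q‖
  wronskian : ‖truncWronskian π q N u v‖ ≤ ‖u - v‖
  wronskian_succ : RelClose θ (truncWronskian π q (N + 1) u v) (u - v)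

lemma truncEstimates_zero (π : C) (q : ℕ) {θ γ : ℝ} (hθ : 0 ≤ θ) (hγ : 0 ≤ γ) (u v : C) :
    TruncEstimates π q 0 θ γ u v := by
  constructor <;>
    simp only [truncCross, truncWronskian, RelClose, zero_add, trunc_zero, trunc_one, mul_one,
      mul_zero, zero_div, sub_zero, sub_self, norm_zero, hθ] <;> positivity

variable [IsUltrametricDist C] {π : C} {q N : ℕ} {θ γ : ℝ} {u v : C}

lemma norm_truncCross_succ_sub_one_le (hπ0 : 0 < ‖π‖) (hq : 2 ≤ q) (hC : IsFrobeniusModulo C ‖π‖ q)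
    (h : IsClosePair ‖π‖ q θ γ u v)
    (hcross : ‖truncCross π q N (v ^ q) (u ^ q) - 1‖ ≤ θ)
    (hw : RelClose θ (truncWronskian π q (N + 1) (u ^ q) (v ^ q)) (u ^ q - v ^ q)) :
    ‖truncCross π q (N + 1) u v - 1‖ ≤ θ := by
  rw [truncCross_succ, add_sub_right_comm]
  refine norm_add_le_of_norm_le hcross ?_
  rw [norm_mul, norm_div, hw.norm_eq h.margin_lt_one, div_mul_eq_mul_div, div_le_iff₀ hπ0]
  exact (mul_le_mul_of_nonneg_right h.norm_left_le (norm_nonneg _)).trans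
    (h.mul_norm_pow_sub_pow_le hC hπ0.le hq)

lemma norm_truncCross_succ_sub_comm_le (hπ0 : 0 < ‖π‖) (h : IsClosePair ‖π‖ q θ γ u v)
    (hcross : ‖π‖ * ‖truncCross π q N (u ^ q) (v ^ q) - truncCross π q N (v ^ q) (u ^ q)‖ ≤
      γ * ‖u ^ q - v ^ q‖)
    (hw : ‖truncWronskian π q (N + 1) (u ^ q) (v ^ q)‖ ≤ ‖u ^ q - v ^ q‖) :
    ‖π‖ * ‖truncCross π q (N + 1) u v - truncCross π q (N + 1) v u‖ ≤ γ * ‖u ^ q - v ^ q‖ := by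
  have hγ := h.radius_nonneg
  have hswap : truncWronskian π q (N + 1) (v ^ q) (u ^ q) =
      -truncWronskian π q (N + 1) (u ^ q) (v ^ q) := (neg_sub _ _).symm
  have hsplit : π * (truncCross π q (N + 1) u v - truncCross π q (N + 1) v u) =
      u * truncWronskian π q (N + 1) (u ^ q) (v ^ q) +
          v * truncWronskian π q (N + 1) (u ^ q) (v ^ q) -
        π * (truncCross π q N (u ^ q) (v ^ q) - truncCross π q N (v ^ q) (u ^ q)) := by
    have hπ : π ≠ 0 := norm_pos_iff.1 hπ0
    rw [truncCross_succ, truncCross_succ, hswap]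
    field_simp
    ring
  rw [← norm_mul, hsplit]
  refine norm_sub_le_of_norm_le (norm_add_le_of_norm_le ?_ ?_) ?_
  · rw [norm_mul]; gcongr; exact h.norm_left_le
  · rw [norm_mul]; gcongr; exact h.norm_right_le
  · rwa [norm_mul]

lemma relClose_truncWronskian_add_two (hπ0 : 0 < ‖π‖) (hq : 2 ≤ q)
    (hC : IsFrobeniusModulo C ‖π‖ q) (h : IsClosePair ‖π‖ q θ γ u v)
    (hcross : ‖truncCross π q N (u ^ q) (v ^ q) - 1‖ ≤ θ)
    (hswap : ‖π‖ * ‖truncCross π q N (u ^ q) (v ^ q) - truncCross π q N (v ^ q) (u ^ q)‖ ≤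
      γ * ‖u ^ q - v ^ q‖)
    (hw₁ : ‖truncWronskian π q (N + 1) (u ^ q) (v ^ q)‖ ≤ ‖u ^ q - v ^ q‖)
    (hw₂ : ‖truncWronskian π q N ((u ^ q) ^ q) ((v ^ q) ^ q)‖ ≤ ‖(u ^ q) ^ q - (v ^ q) ^ q‖) :
    RelClose θ (truncWronskian π q (N + 2) u v) (u - v) := by
  have hγ := h.radius_nonneg
  have hcontr : γ * (γ * ‖u ^ q - v ^ q‖) ≤ θ * ‖u - v‖ * ‖π‖ := by
    calc γ * (γ * ‖u ^ q - v ^ q‖) = γ ^ 2 * ‖u ^ q - v ^ q‖ := by ring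
      _ ≤ θ * ‖π‖ * ‖u - v‖ := h.sq_mul_norm_pow_sub_pow_le hC hπ0.le hq
      _ = θ * ‖u - v‖ * ‖π‖ := by ring
  rw [RelClose, truncWronskian_add_two]
  set c := truncCross π q N (u ^ q) (v ^ q)
  set c' := truncCross π q N (v ^ q) (u ^ q)
  set w₁ := truncWronskian π q (N + 1) (u ^ q) (v ^ q)
  set w₂ := truncWronskian π q N ((u ^ q) ^ q) ((v ^ q) ^ q)
  have hsplit : u * c - v * c' - u * v / π * w₁ + w₂ - (u - v) =
      (u - v) * (c - 1) + v * (c - c') - u * (v * w₁) / π + w₂ := by ring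
  rw [hsplit]
  refine norm_add_le_of_norm_le (norm_sub_le_of_norm_le (norm_add_le_of_norm_le ?_ ?_) ?_) ?_
  · rw [norm_mul, mul_comm θ]
    gcongr
  · refine le_of_mul_le_mul_right ?_ hπ0
    calc ‖v * (c - c')‖ * ‖π‖ = ‖v‖ * (‖π‖ * ‖c - c'‖) := by rw [norm_mul]; ring
      _ ≤ γ * (γ * ‖u ^ q - v ^ q‖) := by gcongr; exact h.norm_right_le
      _ ≤ _ := hcontr
  · rw [norm_div, div_le_iff₀ hπ0, norm_mul, norm_mul]
    refine le_trans ?_ hcontr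
    gcongr
    exacts [h.norm_left_le, h.norm_right_le]
  · exact hw₂.trans (h.norm_pow_pow_sub_pow_pow_le hq)

lemma IsClosePair.truncEstimates (hπ0 : 0 < ‖π‖) (hπ1 : ‖π‖ < 1) (hq : 2 ≤ q)
    (hC : IsFrobeniusModulo C ‖π‖ q) (h : IsClosePair ‖π‖ q θ γ u v) (N : ℕ) :
    TruncEstimates π q N θ γ u v := by
  induction N generalizing u v γ with
  | zero => exact truncEstimates_zero π q h.margin_nonneg h.radius_nonneg u v
  | succ N ih =>
    have hpow := h.pow hC hπ0.le hπ1.le hq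
    have hqq : ‖(u ^ q) ^ q - (v ^ q) ^ q‖ ≤ ‖u ^ q - v ^ q‖ :=
      (norm_pow_sub_pow_le_pow_mul hpow.norm_left_le hpow.norm_right_le q).trans
        (mul_le_of_le_one_left (norm_nonneg _)
          (pow_le_one₀ hpow.radius_nonneg hpow.radius_lt_one.le))
    have e := ih h
    have e₁ := ih hpow
    have e₂ := ih (hpow.pow hC hπ0.le hπ1.le hq)
    have hw₁ := (e₁.wronskian_succ.norm_eq h.margin_lt_one).le
    have hγ : γ ^ q * ‖(u ^ q) ^ q - (v ^ q) ^ q‖ ≤ γ * ‖u ^ q - v ^ q‖ :=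
      mul_le_mul (h.radius_pow_le_radius hq) hqq (norm_nonneg _) h.radius_nonneg
    exact {
      cross_sub_one := norm_truncCross_succ_sub_one_le hπ0 hq hC h (ih hpow.symm).cross_sub_one
        e₁.wronskian_succ
      cross_sub_cross := norm_truncCross_succ_sub_comm_le hπ0 h (e₁.cross_sub_cross.trans hγ) hw₁
      wronskian := (e.wronskian_succ.norm_eq h.margin_lt_one).le
      wronskian_succ := relClose_truncWronskian_add_two hπ0 hq hC h e₁.cross_sub_one
        (e₁.cross_sub_cross.trans hγ) hw₁ e₂.wronskian }

lemma IsClosePair.relClose_wronskian [CompleteSpace C] (hπ0 : 0 < ‖π‖) (hπ1 : ‖π‖ < 1)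
    (hq : 2 ≤ q) (hC : IsFrobeniusModulo C ‖π‖ q) (h : IsClosePair ‖π‖ q θ γ u v) :
    RelClose θ (ghphi1 π q u * ghphi0 π q v - ghphi1 π q v * ghphi0 π q u) (u - v) := by
  have hFu := tendsto_trunc hπ0 hπ1 hq (h.norm_left_le.trans_lt h.radius_lt_one)
  have hFv := tendsto_trunc hπ0 hπ1 hq (h.norm_right_le.trans_lt h.radius_lt_one)
  have hW := ((hFu.snd_nhds.mul hFv.fst_nhds).sub (hFv.snd_nhds.mul hFu.fst_nhds)).sub_const (u - v)
  refine le_of_tendsto ((tendsto_add_atTop_iff_nat 1).2 hW.norm) (Eventually.of_forall fun N => ?_)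
  exact (h.truncEstimates hπ0 hπ1 hq hC N).wronskian_succ

end Wronskian

section LeadingTerm

/-- The radii `γ` strictly between the thresholds `ϖ = γ ^ (q ^ (2 * m) + q ^ (2 * m + 1))` and
`ϖ = γ ^ (q ^ (2 * m - 2) + q ^ (2 * m - 1))` by a margin `θ`. For `m = 0` this is a disk, bounded
by the first threshold only. -/
structure IsInAnnulus (ϖ : ℝ) (q m : ℕ) (θ γ : ℝ) : Prop where
  radius_le : γ ≤ θ
  upper : γ ^ (q ^ (2 * m) + q ^ (2 * m + 1)) ≤ θ * ϖ
  lower : ∀ k < m, ϖ ≤ θ * γ ^ (q ^ (2 * k) + q ^ (2 * k + 1))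

namespace IsInAnnulus

variable {ϖ θ γ : ℝ} {q m : ℕ}

lemma mono {θ' : ℝ} (h : IsInAnnulus ϖ q m θ γ) (hθ : θ ≤ θ') (hϖ : 0 ≤ ϖ) (hγ : 0 ≤ γ) :
    IsInAnnulus ϖ q m θ' γ where
  radius_le := h.radius_le.trans hθ
  upper := h.upper.trans (by gcongr)
  lower k hk := (h.lower k hk).trans (by gcongr)

lemma pow_pow (h : IsInAnnulus ϖ q (m + 1) θ γ) (hθ : θ < 1) (hγ : 0 ≤ γ) (hq : q ≠ 0) :
    IsInAnnulus ϖ q m θ ((γ ^ q) ^ q) := by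
  have hexp : ∀ k, ((γ ^ q) ^ q) ^ (q ^ (2 * k) + q ^ (2 * k + 1)) =
      γ ^ (q ^ (2 * (k + 1)) + q ^ (2 * (k + 1) + 1)) := by
    intro k
    rw [← pow_mul, ← pow_mul]
    congr 1
    ring
  refine ⟨?_, (hexp m).trans_le h.upper, fun k hk => ?_⟩
  · rw [← pow_mul]
    exact (pow_le_of_le_one hγ (h.radius_le.trans hθ.le) (mul_ne_zero hq hq)).trans h.radius_le
  · rw [hexp]
    exact h.lower (k + 1) (by omega)

lemma le_mul_pow_succ (h : IsInAnnulus ϖ q (m + 1) θ γ) : ϖ ≤ θ * γ ^ (q + 1) := by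
  simpa [add_comm] using h.lower 0 m.succ_pos

lemma le_pow_succ (h : IsInAnnulus ϖ q (m + 1) θ γ) (hθ : θ ≤ 1) (hγ : 0 ≤ γ) :
    ϖ ≤ γ ^ (q + 1) :=
  h.le_mul_pow_succ.trans (mul_le_of_le_one_left (by positivity) hθ)

end IsInAnnulus

lemma exists_isInAnnulus {ϖ γ : ℝ} (hϖ : 0 < ϖ) (hγ0 : 0 < γ) (hγ1 : γ < 1) {q : ℕ} (hq : 1 ≤ q)
    {k : ℕ} (hlow : ϖ < γ ^ (q ^ (2 * k) + q ^ (2 * k + 1)))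
    (hup : γ ^ (q ^ (2 * (k + 1)) + q ^ (2 * (k + 1) + 1)) < ϖ) :
    ∃ θ < 1, IsInAnnulus ϖ q (k + 1) θ γ := by
  set a := γ ^ (q ^ (2 * k) + q ^ (2 * k + 1))
  set b := γ ^ (q ^ (2 * (k + 1)) + q ^ (2 * (k + 1) + 1))
  refine ⟨max γ (max (b / ϖ) (ϖ / a)), ?_, ?_⟩
  · refine max_lt hγ1 (max_lt ((div_lt_one hϖ).2 hup) ((div_lt_one (by positivity)).2 hlow))
  refine ⟨le_max_left _ _, ?_, fun j hj => ?_⟩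
  · rw [← div_le_iff₀ hϖ]
    exact (le_max_left _ _).trans (le_max_right _ _)
  · have hexp : q ^ (2 * j) + q ^ (2 * j + 1) ≤ q ^ (2 * k) + q ^ (2 * k + 1) := by
      gcongr <;> omega
    have ha : a ≤ γ ^ (q ^ (2 * j) + q ^ (2 * j + 1)) := pow_le_pow_of_le_one hγ0.le hγ1.le hexp
    calc ϖ = ϖ / a * a := (div_mul_cancel₀ _ (by positivity)).symm
      _ ≤ max γ (max (b / ϖ) (ϖ / a)) * γ ^ (q ^ (2 * j) + q ^ (2 * j + 1)) := by
        gcongr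
        exact (le_max_right _ _).trans (le_max_right _ _)

section Field

variable {C : Type*} [NormedField C]

/-- The monomial of the power series `φ₀(u)` which dominates on the annulus
`IsInAnnulus ‖π‖ q m`. -/
noncomputable def leadingTerm (π : C) (q m : ℕ) (u : C) : C :=
  u ^ (∑ i ∈ Finset.range (2 * m), q ^ i) / π ^ m

lemma leadingTerm_zero (π : C) (q : ℕ) (u : C) : leadingTerm π q 0 u = 1 := by
  simp [leadingTerm]

lemma leadingTerm_succ (π : C) (q m : ℕ) (u : C) :
    leadingTerm π q (m + 1) u = u ^ (q + 1) / π * leadingTerm π q m ((u ^ q) ^ q) := by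
  have hsum : ∑ i ∈ Finset.range (2 * (m + 1)), q ^ i =
      q + 1 + q * q * ∑ i ∈ Finset.range (2 * m), q ^ i := by
    rw [Nat.mul_succ, Finset.sum_range_succ', Finset.sum_range_succ', Finset.mul_sum]
    simp only [pow_succ]
    ring_nf
  rw [leadingTerm, leadingTerm, hsum, pow_add, ← pow_mul, ← pow_mul, pow_succ' π, div_mul_div_comm,
    mul_assoc q q]

lemma norm_leadingTerm (π : C) (q m : ℕ) (u : C) :
    ‖leadingTerm π q m u‖ = ‖u‖ ^ (∑ i ∈ Finset.range (2 * m), q ^ i) / ‖π‖ ^ m := by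
  rw [leadingTerm, norm_div, norm_pow, norm_pow]

lemma norm_pow_pow_pow_le {q : ℕ} (hq : 2 ≤ q) {u : C} (hu : ‖u‖ ≤ 1) :
    ‖(u ^ q) ^ q‖ ^ q ≤ ‖u‖ * ‖u‖ ^ q := by
  have huq : ‖u ^ q‖ ≤ ‖u‖ := norm_pow_le_self (by omega) hu
  calc ‖(u ^ q) ^ q‖ ^ q ≤ ‖(u ^ q) ^ q‖ := by
        rw [← norm_pow]
        exact norm_pow_le_self (by omega)
          ((norm_pow_le_self (by omega) (huq.trans hu)).trans (huq.trans hu))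
    _ ≤ ‖u ^ q‖ ^ 2 := norm_pow_le_sq hq (huq.trans hu)
    _ = ‖u ^ q‖ * ‖u‖ ^ q := by rw [sq, norm_pow]
    _ ≤ ‖u‖ * ‖u‖ ^ q := by gcongr

end Field

variable {C : Type*} [NormedField C] [IsUltrametricDist C] {π : C} {q : ℕ} {θ : ℝ}

lemma norm_trunc_sub_one_le (hπ0 : 0 < ‖π‖) (hq : 2 ≤ q) (hθ : θ ≤ 1) (N : ℕ) {u : C}
    (hu1 : ‖u‖ ≤ 1) (hu : ‖u‖ ^ (q + 1) ≤ θ * ‖π‖) :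
    ‖(trunc π q N u).1 - 1‖ ≤ θ ∧ ‖(trunc π q N u).2‖ ≤ ‖u‖ := by
  have hθ0 : 0 ≤ θ := nonneg_of_mul_nonneg_left (le_trans (by positivity) hu) hπ0
  induction N using Nat.twoStepInduction generalizing u with
  | zero => simpa [trunc_zero] using hθ0
  | one => simpa [trunc_one] using hθ0
  | more N ih₁ ih₂ =>
    have hq0 : q ≠ 0 := by omega
    have huq : ‖u ^ q‖ ≤ ‖u‖ := norm_pow_le_self hq0 hu1
    have huqq : ‖(u ^ q) ^ q‖ ≤ ‖u‖ := (norm_pow_le_self hq0 (huq.trans hu1)).trans huq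
    obtain ⟨h₁, h₁'⟩ := ih₁ (huqq.trans hu1) ((pow_le_pow_left₀ (norm_nonneg _) huqq _).trans hu)
    obtain ⟨h₂, h₂'⟩ := ih₂ (huq.trans hu1) ((pow_le_pow_left₀ (norm_nonneg _) huq _).trans hu)
    rw [trunc_add_two_fst, trunc_add_two_snd, add_sub_assoc]
    refine ⟨norm_add_le_of_norm_le ?_ h₁, norm_add_le_of_norm_le ?_ (h₁'.trans huqq)⟩
    · rw [norm_mul, norm_div, div_mul_eq_mul_div, div_le_iff₀ hπ0]
      refine le_trans ?_ hu
      rw [pow_succ', ← norm_pow]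
      gcongr
    · rw [norm_mul]
      refine mul_le_of_le_one_right (norm_nonneg _) ?_
      rw [← sub_add_cancel (trunc π q (N + 1) (u ^ q)).1 1]
      exact norm_add_le_of_norm_le (h₂.trans hθ) norm_one.le

variable [CompleteSpace C]

lemma norm_ghphi_sub_one_le (hπ0 : 0 < ‖π‖) (hπ1 : ‖π‖ < 1) (hq : 2 ≤ q) (hθ : θ ≤ 1) {u : C}
    (hu1 : ‖u‖ < 1) (hu : ‖u‖ ^ (q + 1) ≤ θ * ‖π‖) :
    ‖ghphi0 π q u - 1‖ ≤ θ ∧ ‖ghphi1 π q u‖ ≤ ‖u‖ := by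
  have hF := tendsto_trunc hπ0 hπ1 hq hu1
  have hbound := fun N => norm_trunc_sub_one_le hπ0 hq hθ N hu1.le hu
  exact ⟨le_of_tendsto' (hF.fst_nhds.sub_const 1).norm fun N => (hbound N).1,
    le_of_tendsto' hF.snd_nhds.norm fun N => (hbound N).2⟩

lemma relClose_leadingTerm_succ (hπ0 : 0 < ‖π‖) (hπ1 : ‖π‖ < 1) (hq : 2 ≤ q) {m : ℕ} {u : C}
    (h : IsInAnnulus ‖π‖ q (m + 1) θ ‖u‖) (hθ : θ < 1)
    (h₀ : RelClose θ (ghphi0 π q ((u ^ q) ^ q)) (leadingTerm π q m ((u ^ q) ^ q)))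
    (h₁ : ‖ghphi1 π q (((u ^ q) ^ q) ^ q)‖ ≤
      ‖(u ^ q) ^ q‖ ^ q * ‖leadingTerm π q m ((u ^ q) ^ q)‖) :
    RelClose θ (ghphi0 π q u) (leadingTerm π q (m + 1) u) ∧
      ‖ghphi1 π q (u ^ q)‖ ≤ ‖u‖ ^ q * ‖leadingTerm π q (m + 1) u‖ := by
  have hu1 : ‖u‖ < 1 := h.radius_le.trans_lt hθ
  have huq : ‖u ^ q‖ < 1 := norm_pow_lt_one hu1 (by omega)
  have hfe₀ := (ghphi_functional_equation hπ0 hπ1 hq hu1).1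
  have hfe₁ := (ghphi_functional_equation hπ0 hπ1 hq huq).2
  have hL := leadingTerm_succ π q m u
  set v := (u ^ q) ^ q
  set L := leadingTerm π q m v
  have hv : ‖v‖ ^ q ≤ θ * ‖u‖ ^ q :=
    (norm_pow_pow_pow_le hq hu1.le).trans (by gcongr; exact h.radius_le)
  have hLu : ‖leadingTerm π q (m + 1) u‖ = ‖u‖ ^ (q + 1) / ‖π‖ * ‖L‖ := by
    rw [hL, norm_mul, norm_div, norm_pow]
  have hLv : ‖L‖ ≤ θ * ‖leadingTerm π q (m + 1) u‖ := by
    rw [hLu, ← mul_assoc, ← mul_div_assoc]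
    exact le_mul_of_one_le_left (norm_nonneg _) ((one_le_div hπ0).2 h.le_mul_pow_succ)
  constructor
  · have hsplit : ghphi0 π q u - leadingTerm π q (m + 1) u =
        u ^ (q + 1) / π * (ghphi0 π q v - L) + u / π * ghphi1 π q (v ^ q) + ghphi0 π q v := by
      rw [hfe₀, hfe₁, hL]
      ring
    rw [RelClose, hsplit]
    refine norm_add_le_of_norm_le (norm_add_le_of_norm_le ?_ ?_) ((h₀.norm_eq hθ).trans_le hLv)
    · rw [norm_mul, norm_div, norm_pow, hLu, mul_left_comm]
      gcongr
      exact h₀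
    · calc ‖u / π * ghphi1 π q (v ^ q)‖ ≤ ‖u‖ / ‖π‖ * (θ * ‖u‖ ^ q * ‖L‖) := by
            rw [norm_mul, norm_div]
            gcongr
            exact h₁.trans (by gcongr)
        _ = θ * ‖leadingTerm π q (m + 1) u‖ := by rw [hLu]; ring
  · have hLv' := hLv.trans (mul_le_of_le_one_left (norm_nonneg _) hθ.le)
    rw [hfe₁]
    refine norm_add_le_of_norm_le ?_ (h₁.trans ?_)
    · rw [norm_mul, norm_pow, h₀.norm_eq hθ]
      gcongr
    · exact mul_le_mul (hv.trans (mul_le_of_le_one_left (by positivity) hθ.le)) hLv'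
        (norm_nonneg _) (by positivity)

lemma relClose_leadingTerm (hπ0 : 0 < ‖π‖) (hπ1 : ‖π‖ < 1) (hq : 2 ≤ q) (m : ℕ) {u : C}
    (h : IsInAnnulus ‖π‖ q m θ ‖u‖) (hθ : θ < 1) :
    RelClose θ (ghphi0 π q u) (leadingTerm π q m u) ∧
      ‖ghphi1 π q (u ^ q)‖ ≤ ‖u‖ ^ q * ‖leadingTerm π q m u‖ := by
  induction m generalizing u with
  | zero =>
    have hu1 : ‖u‖ < 1 := h.radius_le.trans_lt hθ
    have huq : ‖u ^ q‖ ≤ ‖u‖ := norm_pow_le_self (by omega) hu1.le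
    have hu : ‖u‖ ^ (q + 1) ≤ θ * ‖π‖ := by simpa [add_comm] using h.upper
    rw [leadingTerm_zero, RelClose, norm_one, mul_one, mul_one, ← norm_pow]
    exact ⟨(norm_ghphi_sub_one_le hπ0 hπ1 hq hθ.le hu1 hu).1,
      (norm_ghphi_sub_one_le hπ0 hπ1 hq hθ.le (huq.trans_lt hu1)
        ((pow_le_pow_left₀ (norm_nonneg _) huq _).trans hu)).2⟩
  | succ m ih =>
    have hv : IsInAnnulus ‖π‖ q m θ ‖(u ^ q) ^ q‖ := by
      rw [norm_pow, norm_pow]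
      exact h.pow_pow hθ (norm_nonneg u) (by omega)
    exact relClose_leadingTerm_succ hπ0 hπ1 hq h hθ (ih hv).1 (ih hv).2

lemma relClose_ghphi0 (hπ0 : 0 < ‖π‖) (hπ1 : ‖π‖ < 1) (hq : 2 ≤ q) {m : ℕ} {u v : C}
    (huv : RelClose θ u v) (hv : IsInAnnulus ‖π‖ q m θ ‖v‖) (hθ : θ < 1) :
    RelClose θ (ghphi0 π q u) (ghphi0 π q v) := by
  have hu : IsInAnnulus ‖π‖ q m θ ‖u‖ := huv.norm_eq hθ ▸ hv
  have hL : RelClose θ (leadingTerm π q m u) (leadingTerm π q m v) :=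
    (huv.pow ((norm_nonneg u).trans hu.radius_le) hθ _).div_right _
  exact ((relClose_leadingTerm hπ0 hπ1 hq m hu hθ).1.trans hθ hL).trans hθ
    ((relClose_leadingTerm hπ0 hπ1 hq m hv hθ).1.symm hθ)

end LeadingTerm

section Period

lemma exists_margin {ϖ γ ρ r θ₀ : ℝ} {n : ℕ} (hϖ : 0 < ϖ) (hγ : 0 < γ) (hρ : ρ ∈ Set.Ico 0 r)
    (hn : n ≠ 0) (hrγ : r ≤ γ) (hr : r ^ n * γ ^ 2 ≤ ϖ) (hθ₀ : θ₀ < 1) :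
    ∃ θ < 1, θ₀ ≤ θ ∧ ρ ≤ θ * γ ∧ ρ ^ n * γ ^ 2 ≤ θ * ϖ := by
  refine ⟨max θ₀ (max (ρ / γ) (ρ ^ n * γ ^ 2 / ϖ)), max_lt hθ₀ (max_lt ?_ ?_), le_max_left _ _,
    ?_, ?_⟩
  · exact (div_lt_one hγ).2 (hρ.2.trans_le hrγ)
  · have hpow : ρ ^ n < r ^ n := pow_lt_pow_left₀ hρ.2 hρ.1 hn
    exact (div_lt_one hϖ).2 ((mul_lt_mul_of_pos_right hpow (by positivity)).trans_le hr)
  · rw [← div_le_iff₀ hγ]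
    exact (le_max_left _ _).trans (le_max_right _ _)
  · rw [← div_le_iff₀ hϖ]
    exact (le_max_right _ _).trans (le_max_right _ _)

lemma IsInAnnulus.radius_pos_and_le {ϖ θ γ r : ℝ} {q m : ℕ} (h : IsInAnnulus ϖ q (m + 1) θ γ)
    (hϖ : 0 < ϖ) (hθ : θ < 1) (hγ : 0 ≤ γ) (hq : 2 ≤ q) (hr : r ^ (q - 1) * γ ^ 2 ≤ ϖ) :
    0 < γ ∧ r ≤ γ := by
  have hϖγ := h.le_pow_succ hθ.le hγ
  have hγ0 : 0 < γ := hγ.lt_of_ne' (ne_zero_pow q.succ_ne_zero (hϖ.trans_le hϖγ).ne')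
  refine ⟨hγ0, le_of_pow_le_pow_left₀ (by omega : q - 1 ≠ 0) hγ ?_⟩
  refine le_of_mul_le_mul_right ?_ (pow_pos hγ0 2)
  rw [← pow_add, show q - 1 + 2 = q + 1 by omega]
  exact hr.trans hϖγ

variable {C : Type*} [NormedField C] [IsUltrametricDist C] {π : C} {q : ℕ} {θ : ℝ}

lemma RelClose.sq_mul_div_sub_div {x y z a b d : C} (hθ : θ < 1) (hz : z ≠ 0)
    (hx : RelClose θ x z) (hy : RelClose θ y z) (hd : RelClose θ (a * y - b * x) d) :
    RelClose θ (z ^ 2 * (a / x - b / y)) d := by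
  have hx0 : x ≠ 0 := norm_ne_zero_iff.1 (hx.norm_eq hθ ▸ norm_ne_zero_iff.2 hz)
  have hy0 : y ≠ 0 := norm_ne_zero_iff.1 (hy.norm_eq hθ ▸ norm_ne_zero_iff.2 hz)
  have h := (((hx.symm hθ).mul hθ (hy.symm hθ)).mul hθ hd).div_right (x * y)
  rw [mul_div_cancel_left₀ _ (mul_ne_zero hx0 hy0)] at h
  convert h using 1
  field_simp

lemma IsInAnnulus.isClosePair {ϖ : ℝ} {m : ℕ} {a u v : C} (ha : IsInAnnulus ϖ q m θ ‖a‖)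
    (hθ : θ < 1) (hu : RelClose θ u a) (hv : RelClose θ v a)
    (huv : ‖u - v‖ ^ (q - 1) * ‖a‖ ^ 2 ≤ θ * ϖ) : IsClosePair ϖ q θ ‖a‖ u v where
  norm_left_le := (hu.norm_eq hθ).le
  norm_right_le := (hv.norm_eq hθ).le
  radius_pow_le := (pow_le_of_le_one (norm_nonneg a) (ha.radius_le.trans hθ.le)
    q.succ_ne_zero).trans ha.radius_le
  margin_lt_one := hθ
  dist_pow_mul_le := huv

variable [CompleteSpace C]

lemma bijOn_ghphi1_div_ghphi0 (hπ0 : 0 < ‖π‖) (hπ1 : ‖π‖ < 1) (hq : 2 ≤ q)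
    (hC : IsFrobeniusModulo C ‖π‖ q) {m : ℕ} {a : C} (ha : IsInAnnulus ‖π‖ q (m + 1) θ ‖a‖)
    (hθ : θ < 1) {r : ℝ} (hr : r ^ (q - 1) * ‖a‖ ^ 2 ≤ ‖π‖) :
    Set.BijOn (fun u => ghphi1 π q u / ghphi0 π q u) (Metric.ball a r)
      (Metric.ball (ghphi1 π q a / ghphi0 π q a) (r / ‖leadingTerm π q (m + 1) a‖ ^ 2)) := by
  obtain ⟨ha0, hra⟩ := ha.radius_pos_and_le hπ0 hθ (norm_nonneg a) hq hr
  have hnorm : ‖ghphi0 π q a‖ = ‖leadingTerm π q (m + 1) a‖ :=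
    (relClose_leadingTerm hπ0 hπ1 hq _ ha hθ).1.norm_eq hθ
  have hφ : ghphi0 π q a ≠ 0 := by
    rw [← norm_pos_iff, hnorm, norm_leadingTerm]
    positivity
  rw [← hnorm, ← norm_pow]
  refine bijOn_ball_of_relClose_mul (pow_ne_zero 2 hφ) fun ρ hρ => ?_
  obtain ⟨θ', hθ', hle, hργ, hρϖ⟩ := exists_margin hπ0 ha0 hρ (by omega) hra hr hθ
  have ha' := ha.mono hle hπ0.le ha0.le
  have hclose : ∀ u ∈ Metric.closedBall a ρ, RelClose θ' u a := fun u hu =>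
    (mem_closedBall_iff_norm.1 hu).trans hργ
  have hdist : ∀ u ∈ Metric.closedBall a ρ, ∀ v ∈ Metric.closedBall a ρ, ‖u - v‖ ≤ ρ := by
    intro u hu v hv
    rw [← sub_sub_sub_cancel_right u v a]
    exact norm_sub_le_of_norm_le (mem_closedBall_iff_norm.1 hu) (mem_closedBall_iff_norm.1 hv)
  refine ⟨θ', hθ', fun u hu v hv => ?_⟩
  have hpair : IsClosePair ‖π‖ q θ' ‖a‖ u v :=
    ha'.isClosePair hθ' (hclose u hu) (hclose v hv)
      (le_trans (by gcongr; exact hdist u hu v hv) hρϖ)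
  exact .sq_mul_div_sub_div hθ' hφ (relClose_ghphi0 hπ0 hπ1 hq (hclose u hu) ha' hθ')
    (relClose_ghphi0 hπ0 hπ1 hq (hclose v hv) ha' hθ') (hpair.relClose_wronskian hπ0 hπ1 hq hC)

end Period

section Radii

variable {ϖ γ : ℝ} {q : ℕ}

lemma exists_isInAnnulus_of_rpow (hϖ0 : 0 < ϖ) (hϖ1 : ϖ < 1) (hq : 1 ≤ q) {k : ℕ}
    (hlow : ϖ ^ ((1 : ℝ) / ((q : ℝ) ^ (2 * k + 1) + (q : ℝ) ^ (2 * k + 1 - 1))) < γ)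
    (hup : γ < ϖ ^ ((1 : ℝ) / ((q : ℝ) ^ (2 * k + 1 + 2) + (q : ℝ) ^ (2 * k + 1 + 1)))) :
    ∃ θ < 1, IsInAnnulus ϖ q (k + 1) θ γ := by
  have hγ0 : 0 < γ := (Real.rpow_pos_of_pos hϖ0 _).trans hlow
  have hγ1 : γ < 1 := hup.trans (Real.rpow_lt_one hϖ0.le hϖ1 (by positivity))
  rw [one_div, Real.rpow_inv_lt_iff_of_pos hϖ0.le hγ0.le (by positivity)] at hlow
  rw [one_div, Real.lt_rpow_inv_iff_of_pos hγ0.le hϖ0.le (by positivity)] at hup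
  refine exists_isInAnnulus hϖ0 hγ0 hγ1 hq ?_ ?_
  · convert hlow using 1
    rw [← Real.rpow_natCast, Nat.add_sub_cancel, add_comm]
    push_cast
    rfl
  · convert hup using 1
    rw [← Real.rpow_natCast, add_comm]
    push_cast
    rfl

lemma critical_radius_pow_mul_sq (hϖ : 0 ≤ ϖ) (hγ : 0 < γ) (hq : 2 ≤ q) :
    ((ϖ * γ ^ (-(2 : ℝ))) ^ ((1 : ℝ) / ((q : ℝ) - 1))) ^ (q - 1) * γ ^ 2 = ϖ := by
  have hq1 : ((q - 1 : ℕ) : ℝ) = (q : ℝ) - 1 := by rw [Nat.cast_sub (by omega), Nat.cast_one]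
  rw [one_div, ← hq1, Real.rpow_inv_natCast_pow (by positivity) (by omega), Real.rpow_neg hγ.le,
    Real.rpow_two, inv_mul_cancel_right₀ (by positivity)]

lemma image_radius_eq (hϖ : 0 < ϖ) (hγ : 0 < γ) (hq : q ≠ 1) (k : ℕ) :
    ϖ ^ (((2 * k + 1 : ℕ) : ℝ) + 1 + 1 / ((q : ℝ) - 1)) *
        γ ^ (-(2 : ℝ) * (q : ℝ) ^ (2 * k + 1 + 1) / ((q : ℝ) - 1)) =
      (ϖ * γ ^ (-(2 : ℝ))) ^ ((1 : ℝ) / ((q : ℝ) - 1)) /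
        (γ ^ (∑ i ∈ Finset.range (2 * (k + 1)), q ^ i) / ϖ ^ (k + 1)) ^ 2 := by
  have hq' : (q : ℝ) ≠ 1 := by exact_mod_cast hq
  have hq1 : (q : ℝ) - 1 ≠ 0 := sub_ne_zero.2 hq'
  have hM : ((∑ i ∈ Finset.range (2 * (k + 1)), q ^ i : ℕ) : ℝ) =
      ((q : ℝ) ^ (2 * k + 1 + 1) - 1) / ((q : ℝ) - 1) := by
    push_cast
    exact geom_sum_eq hq' _
  generalize (∑ i ∈ Finset.range (2 * (k + 1)), q ^ i) = M at *
  have hϖexp : ((2 * k + 1 : ℕ) : ℝ) + 1 + 1 / ((q : ℝ) - 1) =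
      ((2 * (k + 1) : ℕ) : ℝ) + 1 / ((q : ℝ) - 1) := by push_cast; ring
  have hγexp : -(2 : ℝ) * (q : ℝ) ^ (2 * k + 1 + 1) / ((q : ℝ) - 1) =
      -(2 : ℝ) * (1 / ((q : ℝ) - 1)) - ((2 * M : ℕ) : ℝ) := by
    push_cast
    rw [hM]
    field_simp
    ring
  rw [Real.mul_rpow hϖ.le (by positivity), ← Real.rpow_mul hγ.le, hϖexp, hγexp,
    Real.rpow_add hϖ, Real.rpow_sub hγ, Real.rpow_natCast, Real.rpow_natCast, pow_mul' ϖ,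
    pow_mul' γ]
  field_simp

end Radii

lemma norm_prime_lt_one {p : ℕ} [Fact p.Prime] {C : Type*} [NormedField C] [Algebra ℚ_[p] C]
    (hiso : ∀ x : ℚ_[p], ‖algebraMap ℚ_[p] C x‖ = ‖x‖) : ‖(p : C)‖ < 1 := by
  rw [← map_natCast (algebraMap ℚ_[p] C), hiso]
  exact Padic.norm_p_lt_one

end GrossHopkins

theorem period_map_image_bijection_odd_general {p : ℕ} (hp : p.Prime) {C : Type*} [NormedField C]
    [IsUltrametricDist C] [CompleteSpace C] {q : ℕ} (hq : ∃ r : ℕ, 0 < r ∧ q = p ^ r)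
    {π : C} (hπ0 : 0 < ‖π‖) (hπ1 : ‖π‖ < 1) (hpπ : ‖(p : C)‖ ≤ ‖π‖) {s : ℕ} (hs : Odd s) {γ : ℝ}
    (h1 : ‖π‖ ^ ((1 : ℝ) / ((q : ℝ) ^ s + (q : ℝ) ^ (s - 1))) < γ)
    (h2 : γ < ‖π‖ ^ ((1 : ℝ) / ((q : ℝ) ^ (s + 2) + (q : ℝ) ^ (s + 1))))
    {u0 : C} (hu0 : ‖u0‖ = γ) :
    Set.BijOn (fun u => ghphi1 π q u / ghphi0 π q u)
      {u : C | ‖u - u0‖ < (‖π‖ * γ ^ (-(2 : ℝ))) ^ ((1 : ℝ) / ((q : ℝ) - 1))}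
      {w : C | ‖w - ghphi1 π q u0 / ghphi0 π q u0‖ <
        ‖π‖ ^ ((s : ℝ) + 1 + 1 / ((q : ℝ) - 1)) *
          γ ^ (-(2 : ℝ) * (q : ℝ) ^ (s + 1) / ((q : ℝ) - 1))} := by
  obtain ⟨r, hr, hqr⟩ := hq
  obtain ⟨k, rfl⟩ := hs
  subst hu0
  have hq2 : 2 ≤ q := hqr ▸ hp.two_le.trans (Nat.le_self_pow hr.ne' p)
  have hC : GrossHopkins.IsFrobeniusModulo C ‖π‖ q :=
    hqr ▸ GrossHopkins.isFrobeniusModulo_prime_pow hp hpπ r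
  have hγ : 0 < ‖u0‖ := (Real.rpow_pos_of_pos hπ0 _).trans h1
  obtain ⟨θ, hθ, hu0⟩ := GrossHopkins.exists_isInAnnulus_of_rpow hπ0 hπ1 (by omega) h1 h2
  have hbij := GrossHopkins.bijOn_ghphi1_div_ghphi0 hπ0 hπ1 hq2 hC hu0 hθ
    (GrossHopkins.critical_radius_pow_mul_sq hπ0.le hγ hq2).le
  rw [GrossHopkins.norm_leadingTerm, ← GrossHopkins.image_radius_eq hπ0 hγ (by omega) k] at hbij
  simpa only [Metric.ball, dist_eq_norm] using hbij

theorem period_map_image_bijection_odd {p : ℕ} [Fact p.Prime] {C : Type*} [NormedField C] [IsUltrametricDist C]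
    [CompleteSpace C] [IsAlgClosed C] [Algebra ℚ_[p] C]
    (hiso : ∀ x : ℚ_[p], ‖algebraMap ℚ_[p] C x‖ = ‖x‖)
    (K : IntermediateField ℚ_[p] C) (hKfin : FiniteDimensional ℚ_[p] K)
    (q : ℕ) (hq : ∃ r : ℕ, 0 < r ∧ q = p ^ r)
    (π : C) (hπK : π ∈ K) (hπ0 : 0 < ‖π‖) (hπ1 : ‖π‖ < 1)
    (hπunif : ∀ x ∈ K, ‖x‖ < 1 → ‖x‖ ≤ ‖π‖)
    (hres : ∃ S : Finset C, S.card = q ∧ (∀ s ∈ S, s ∈ K ∧ ‖s‖ ≤ 1) ∧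
      (∀ x ∈ K, ‖x‖ ≤ 1 → ∃ s ∈ S, ‖x - s‖ < 1) ∧
      (∀ s ∈ S, ∀ t ∈ S, s ≠ t → ‖s - t‖ = 1))
    (s : ℕ) (hs : Odd s) (hs1 : 1 ≤ s)
    (γ : ℝ) (h1 : ‖π‖ ^ ((1:ℝ)/((q:ℝ)^s + (q:ℝ)^(s-1))) < γ)
    (h2 : γ < ‖π‖ ^ ((1:ℝ)/((q:ℝ)^(s+2) + (q:ℝ)^(s+1))))
    (u0 : C) (hu0 : ‖u0‖ = γ) :
    Set.BijOn (fun u => ghphi1 π q u / ghphi0 π q u)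
      {u : C | ‖u - u0‖ < (‖π‖ * γ ^ (-(2:ℝ))) ^ ((1:ℝ)/((q:ℝ)-1))}
      {w : C | ‖w - ghphi1 π q u0 / ghphi0 π q u0‖ <
        ‖π‖ ^ ((s:ℝ) + 1 + 1/((q:ℝ)-1)) * γ ^ (-(2:ℝ) * (q:ℝ)^(s+1)/((q:ℝ)-1))} := by
  exact period_map_image_bijection_odd_general Fact.out hq hπ0 hπ1
    (hπunif _ (natCast_mem K p) (GrossHopkins.norm_prime_lt_one hiso)) hs h1 h2 hu0
end
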